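/- arXiv:1207.5750 — 2 statements merged into one kernel-verified Lean document; each statement's English description precedes it below -/
import Mathlib

section
/- Let 𝔾 be a locally compact quantum group and let E : B(L²(𝔾)) → B(L²(𝔾)) be a completely bounded L∞(𝔾̂)-bimodule map. Then for every x ∈ B(L²(𝔾)) and every ω ∈ B(L²(𝔾))_*, one has (ω⊗id)Δ̄(E(x)) = E((ω⊗id)Δ̄(x)), where Δ̄ : B(L²(𝔾)) → L∞(𝔾) ⊗̄ B(L²(𝔾)) is the normal extension of the co-multiplication given by Δ̄(x) = W*(1⊗x)W. -/
/-!
Common framework: an axiomatization of locally compact quantum groups (in the von Neumann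
algebraic setting of Kustermans–Vaes) acting on a Hilbert space `H = L²(𝔾)`.

Since completed Hilbert space tensor products are not available, the tensor square
`H2 = L²(𝔾) ⊗ L²(𝔾)` is axiomatized: a Hilbert space together with a bilinear map
`tmul` with total range satisfying `⟪a ⊗ b, c ⊗ d⟫ = ⟪a, c⟫⟪b, d⟫`, the induced tensor
product of operators `tensorOp`, tensor products `funcTensor` of normal functionals,
and the slice maps `sliceL = ω ⊗ id`, `sliceR = id ⊗ ω`.

Normal functionals (elements of the predual `B(H)_*`) are characterized concretely:
`ω(x) = ∑ ⟪ηₙ, x ξₙ⟫` with `∑‖ξₙ‖² , ∑‖ηₙ‖² < ∞`.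

Membership of an operator `X` on `H2` in a spatial tensor product `P ⊗̄ Q` of von Neumann
algebras is encoded, via the commutation theorem, as: `X` commutes with all `a' ⊗ b'`
with `a' ∈ P'`, `b' ∈ Q'`.

A locally compact quantum group is recorded through its left regular co-representation
`W ∈ L∞(𝔾) ⊗̄ L∞(𝔾̂)` and right regular co-representation `V ∈ L∞(𝔾̂)' ⊗̄ L∞(𝔾)`,
which implement the co-multiplication: `Δ(x) = W*(1 ⊗ x)W = V(x ⊗ 1)V*` for `x ∈ L∞(𝔾)`;
`Δ̄(x) := W*(1 ⊗ x)W` for arbitrary `x ∈ B(H)` is the canonical normal extension of `Δ`.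
-/

noncomputable section

open scoped ComplexOrder ComplexInnerProductSpace

namespace LCQGNote

/-- The bounded operators `B(H)`. -/
abbrev B (H : Type*) [NormedAddCommGroup H] [InnerProductSpace ℂ H] : Type _ := H →L[ℂ] H

variable (H H2 : Type*)
  [NormedAddCommGroup H] [InnerProductSpace ℂ H] [CompleteSpace H]
  [NormedAddCommGroup H2] [InnerProductSpace ℂ H2] [CompleteSpace H2]

/-- The vector functional `ω_{ξ,η} : x ↦ ⟨x ξ, η⟩` on `B(H)` (written here in the
Mathlib convention for inner products, which are conjugate-linear in the first slot). -/
def vecFunctional (ξ η : H) : B H →ₗ[ℂ] ℂ where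
  toFun x := ⟪η, x ξ⟫
  map_add' x y := by simp [inner_add_right]
  map_smul' c x := by simp [inner_smul_right]

/-- A functional on `B(H)` is normal (σ-weakly continuous, i.e. belongs to the predual
`B(H)_*`) iff it has the form `x ↦ ∑ ⟪ηₙ, x ξₙ⟫` with `(ξₙ), (ηₙ)` square-summable. -/
def IsNormalFunctional (ω : B H →ₗ[ℂ] ℂ) : Prop :=
  ∃ ξ η : ℕ → H, Summable (fun n => ‖ξ n‖ ^ 2) ∧ Summable (fun n => ‖η n‖ ^ 2) ∧
    ∀ x : B H, HasSum (fun n => ⟪η n, x (ξ n)⟫) (ω x)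

/-- `φ` is a state of the von Neumann algebra `N ⊆ B(H)`: it is unital and positive on `N`.
(Functionals on `N` are encoded as functionals on `B(H)`; only the restriction to `N`
matters, by the Hahn–Banach extension theorem.) -/
def IsStateOn (N : VonNeumannAlgebra H) (φ : B H →ₗ[ℂ] ℂ) : Prop :=
  φ 1 = 1 ∧ ∀ x : B H, x ∈ N → x.IsPositive → 0 ≤ φ x

/-- A conditional expectation of `B(H)` onto a von Neumann subalgebra `N`:
a unital positive projection `E : B(H) → B(H)` with range `N`. -/
structure IsConditionalExpectation (N : VonNeumannAlgebra H) (E : B H →ₗ[ℂ] B H) : Prop where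
  unital : E 1 = 1
  positive : ∀ x : B H, x.IsPositive → (E x).IsPositive
  mem_range : ∀ x : B H, E x ∈ N
  fixes : ∀ x ∈ N, E x = x

/-- The center of a von Neumann algebra `N`: elements of `N` commuting with all of `N`. -/
def center (N : VonNeumannAlgebra H) : Set (B H) := {z | z ∈ N ∧ ∀ y ∈ N, z * y = y * z}

/-- A von Neumann algebra `N ⊆ B(H)` is injective if there is a conditional expectation
of `B(H)` onto `N`. -/
def IsInjectiveVNA (N : VonNeumannAlgebra H) : Prop :=
  ∃ E : B H →ₗ[ℂ] B H, IsConditionalExpectation H N E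

/-- A locally compact quantum group `𝔾`, axiomatized over its Hilbert space `H = L²(𝔾)`
together with the tensor square `H2 = L²(𝔾) ⊗ L²(𝔾)`.  `M = L∞(𝔾)`, `Mhat = L∞(𝔾̂)`
(both acting canonically on `L²(𝔾)`). -/
structure LCQG where
  /-- `L∞(𝔾)` -/
  M : VonNeumannAlgebra H
  /-- `L∞(𝔾̂)`, the dual von Neumann algebra, also acting on `L²(𝔾)` -/
  Mhat : VonNeumannAlgebra H
  /-- the tensor map `H × H → H2 = H ⊗ H` -/
  tmul : H →ₗ[ℂ] H →ₗ[ℂ] H2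
  tmul_inner : ∀ a b c d : H, ⟪tmul a b, tmul c d⟫ = ⟪a, c⟫ * ⟪b, d⟫
  tmul_total : (Submodule.span ℂ {v : H2 | ∃ a b, v = tmul a b}).topologicalClosure = ⊤
  /-- the tensor product of operators: `tensorOp x y = x ⊗ y` on `H2` -/
  tensorOp : B H →ₗ[ℂ] B H →ₗ[ℂ] B H2
  tensorOp_apply : ∀ (x y : B H) (a b : H), tensorOp x y (tmul a b) = tmul (x a) (y b)
  /-- the flip (tensor swap) unitary `Σ` on `H2` -/
  flipU : B H2
  flipU_apply : ∀ a b : H, flipU (tmul a b) = tmul b a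
  /-- the tensor product `ω ⊗ ρ` of (normal) functionals -/
  funcTensor : (B H →ₗ[ℂ] ℂ) → (B H →ₗ[ℂ] ℂ) → (B H2 →ₗ[ℂ] ℂ)
  funcTensor_elem : ∀ ω ρ (x y : B H), funcTensor ω ρ (tensorOp x y) = ω x * ρ y
  funcTensor_normal : ∀ ω ρ, IsNormalFunctional H ω → IsNormalFunctional H ρ →
    IsNormalFunctional H2 (funcTensor ω ρ)
  /-- the left slice map `sliceL ω = ω ⊗ id : B(H2) → B(H)` -/
  sliceL : (B H →ₗ[ℂ] ℂ) → B H2 →ₗ[ℂ] B H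
  /-- the right slice map `sliceR ω = id ⊗ ω : B(H2) → B(H)` -/
  sliceR : (B H →ₗ[ℂ] ℂ) → B H2 →ₗ[ℂ] B H
  sliceL_char : ∀ ω X (ξ η : H),
    vecFunctional H ξ η (sliceL ω X) = funcTensor ω (vecFunctional H ξ η) X
  sliceR_char : ∀ ω X (ξ η : H),
    vecFunctional H ξ η (sliceR ω X) = funcTensor (vecFunctional H ξ η) ω X
  /-- the left regular co-representation `W` -/
  W : B H2
  W_unitary_l : star W * W = 1
  W_unitary_r : W * star W = 1
  /-- `W ∈ L∞(𝔾) ⊗̄ L∞(𝔾̂)` (via the commutation theorem for tensor products) -/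
  W_mem : ∀ a' ∈ M.commutant, ∀ b' ∈ Mhat.commutant, Commute W (tensorOp a' b')
  /-- the right regular co-representation `V` -/
  V : B H2
  V_unitary_l : star V * V = 1
  V_unitary_r : V * star V = 1
  /-- `V ∈ L∞(𝔾̂)' ⊗̄ L∞(𝔾)` (via the commutation theorem for tensor products) -/
  V_mem : ∀ a ∈ Mhat, ∀ b' ∈ M.commutant, Commute V (tensorOp a b')
  /-- `Δ` maps `L∞(𝔾)` into `L∞(𝔾) ⊗̄ L∞(𝔾)` -/
  Delta_mem : ∀ x ∈ M, ∀ a' ∈ M.commutant, ∀ b' ∈ M.commutant,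
    Commute (star W * tensorOp 1 x * W) (tensorOp a' b')
  /-- `V` also implements the co-multiplication: `Δ(x) = V(x ⊗ 1)V*` on `L∞(𝔾)` -/
  Delta_V : ∀ x ∈ M, star W * tensorOp 1 x * W = V * tensorOp x 1 * star V
  /-- slices of `Δ(x)`, `x ∈ L∞(𝔾)`, lie in `L∞(𝔾)` -/
  slice_Delta_mem : ∀ ω, ∀ x ∈ M, sliceL ω (star W * tensorOp 1 x * W) ∈ M
  /-- slices `(ω ⊗ id)(V (x ⊗ 1) V*)` lie in `L∞(𝔾)`, since `V ∈ L∞(𝔾̂)' ⊗̄ L∞(𝔾)` -/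
  sliceL_rConj_mem : ∀ ω (x : B H), sliceL ω (V * tensorOp x 1 * star V) ∈ M
  /-- the fixed-point characterization `L∞(𝔾̂) = {y : V(y ⊗ 1)V* = y ⊗ 1}`
  (cf. Kustermans–Vaes, proof of Proposition 4.2) -/
  fixedPoint_mem : ∀ y : B H, V * tensorOp y 1 * star V = tensorOp y 1 → y ∈ Mhat

namespace LCQG

variable {H H2} (Q : LCQG H H2)

/-- The (extended) co-multiplication `Δ̄ : B(L²(𝔾)) → L∞(𝔾) ⊗̄ B(L²(𝔾))`,
`Δ̄(x) = W*(1 ⊗ x)W`; its restriction to `L∞(𝔾)` is the co-multiplication `Δ`. -/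
def Delta (x : B H) : B H2 := star Q.W * Q.tensorOp 1 x * Q.W

/-- The map `x ↦ V (x ⊗ 1) V*` on `B(L²(𝔾))`. -/
def rConj : B H →ₗ[ℂ] B H2 where
  toFun x := Q.V * Q.tensorOp x 1 * star Q.V
  map_add' x y := by simp [mul_add, add_mul]
  map_smul' c x := by simp [mul_smul_comm, smul_mul_assoc]

/-- The left regular co-representation of the dual: `Ŵ = Σ W* Σ` (i.e. `σ(W)*`). -/
def What : B H2 := Q.flipU * star Q.W * Q.flipU

/-- The (extended) co-multiplication of the dual quantum group, `Δ̂(y) = Ŵ*(1 ⊗ y)Ŵ`. -/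
def Deltahat (y : B H) : B H2 := star Q.What * Q.tensorOp 1 y * Q.What

/-- `m` is a left-invariant mean on `L∞(𝔾)`: a state with
`m((ω ⊗ id)Δ(x)) = ω(1) m(x)` for all `x ∈ L∞(𝔾)` and normal `ω ∈ L¹(𝔾)`. -/
def IsLeftInvariantMean (m : B H →ₗ[ℂ] ℂ) : Prop :=
  IsStateOn H Q.M m ∧
    ∀ x ∈ Q.M, ∀ ω : B H →ₗ[ℂ] ℂ, IsNormalFunctional H ω →
      m (Q.sliceL ω (Q.Delta x)) = ω 1 * m x

/-- `𝔾` is amenable if it admits a left-invariant mean. -/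
def Amenable : Prop := ∃ m : B H →ₗ[ℂ] ℂ, Q.IsLeftInvariantMean m

/-- `𝔾` is quantum injective if there is a conditional expectation of `B(L²(𝔾))` onto
`L∞(𝔾)` mapping `L∞(𝔾̂)` into the center of `L∞(𝔾)`. -/
def QuantumInjective : Prop :=
  ∃ E : B H →ₗ[ℂ] B H, IsConditionalExpectation H Q.M E ∧
    ∀ x ∈ Q.Mhat, E x ∈ center H Q.M

end LCQG

section CompletelyBounded


/-- The inclusion of the `j`-th coordinate `H → H^n` (Hilbert direct sum). -/
def coordIncl (n : ℕ) (j : Fin n) : H →L[ℂ] PiLp 2 (fun _ : Fin n => H) :=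
  (PiLp.continuousLinearEquiv 2 ℂ (fun _ : Fin n => H)).symm.toContinuousLinearMap.comp
    (ContinuousLinearMap.pi fun i => if i = j then ContinuousLinearMap.id ℂ H else 0)

/-- The projection onto the `i`-th coordinate `H^n → H`. -/
def coordProj (n : ℕ) (i : Fin n) : PiLp 2 (fun _ : Fin n => H) →L[ℂ] H :=
  (ContinuousLinearMap.proj i).comp
    (PiLp.continuousLinearEquiv 2 ℂ (fun _ : Fin n => H)).toContinuousLinearMap

/-- The `n`-th matrix amplification `id_{Mₙ} ⊗ E` of a map `E : B(H) → B(H)`, acting on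
`B(H^n) ≅ Mₙ(B(H))` entrywise. -/
def amplify (E : B H →ₗ[ℂ] B H) (n : ℕ) (T : B (PiLp 2 fun _ : Fin n => H)) :
    B (PiLp 2 fun _ : Fin n => H) :=
  ∑ i : Fin n, ∑ j : Fin n,
    (coordIncl H n i).comp
      ((E ((coordProj H n i).comp (T.comp (coordIncl H n j)))).comp (coordProj H n j))

/-- A map `E : B(H) → B(H)` is completely bounded if the norms of all its matrix
amplifications `id_{Mₙ} ⊗ E : Mₙ(B(H)) → Mₙ(B(H))`, `n ∈ ℕ`, are uniformly bounded. -/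
def CompletelyBounded (E : B H →ₗ[ℂ] B H) : Prop :=
  ∃ C : ℝ, 0 ≤ C ∧ ∀ (n : ℕ) (T : B (PiLp 2 fun _ : Fin n => H)),
    ‖amplify H E n T‖ ≤ C * ‖T‖

end CompletelyBounded

section Aux

open Filter Topology InnerProductSpace

variable {H H2}

/-- Complete boundedness implies boundedness. -/
lemma CompletelyBounded.bdd {E : B H →ₗ[ℂ] B H} (h : CompletelyBounded H E) :
    ∃ K : ℝ, 0 ≤ K ∧ ∀ x, ‖E x‖ ≤ K * ‖x‖ := by
  obtain ⟨C, hC, h⟩ := h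
  have hpi : (coordProj H 1 0).comp (coordIncl H 1 0) = ContinuousLinearMap.id ℂ H := by
    ext v
    simp [coordProj, coordIncl]
  set p := coordProj H 1 0 with hp
  set i := coordIncl H 1 0 with hi
  refine ⟨‖p‖ * (C * (‖i‖ * ‖p‖)) * ‖i‖, by positivity, fun x => ?_⟩
  have h1 := h 1 (i.comp (x.comp p))
  have key : p.comp ((amplify H E 1 (i.comp (x.comp p))).comp i) = E x := by
    have : p.comp ((i.comp (x.comp p)).comp i) = x := by
      ext v
      have e := fun w => DFunLike.congr_fun hpi w
      simp only [ContinuousLinearMap.comp_apply, ContinuousLinearMap.id_apply] at e ⊢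
      simp [e]
    simp only [amplify, Fin.sum_univ_one, Fin.isValue, ← hp, ← hi, this]
    ext v
    have e := fun w => DFunLike.congr_fun hpi w
    simp only [ContinuousLinearMap.comp_apply, ContinuousLinearMap.id_apply] at e ⊢
    simp [e]
  rw [← key]
  calc _ ≤ ‖p‖ * (‖amplify H E 1 (i.comp (x.comp p))‖ * ‖i‖) :=
        (ContinuousLinearMap.opNorm_comp_le _ _).trans
          (mul_le_mul_of_nonneg_left (ContinuousLinearMap.opNorm_comp_le _ _) (norm_nonneg _))
    _ ≤ ‖p‖ * ((C * (‖i‖ * (‖x‖ * ‖p‖))) * ‖i‖) := by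
        gcongr
        refine h1.trans ?_
        gcongr
        exact (ContinuousLinearMap.opNorm_comp_le _ _).trans
          (mul_le_mul_of_nonneg_left (ContinuousLinearMap.opNorm_comp_le _ _) (norm_nonneg _))
    _ = _ := by ring

namespace LCQG

variable (Q : LCQG H H2)

lemma norm_tmul (a b : H) : ‖Q.tmul a b‖ = ‖a‖ * ‖b‖ := by
  have h := Q.tmul_inner a b a b
  rw [inner_self_eq_norm_sq_to_K, inner_self_eq_norm_sq_to_K, inner_self_eq_norm_sq_to_K] at h
  have h' : ‖Q.tmul a b‖ ^ 2 = (‖a‖ * ‖b‖) ^ 2 := by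
    rw [mul_pow]
    exact_mod_cast h
  exact (sq_eq_sq₀ (norm_nonneg _) (by positivity)).1 h'

/-- The creation operator `b ↦ a ⊗ b`. -/
def L (a : H) : H →L[ℂ] H2 :=
  (Q.tmul a).mkContinuous ‖a‖ fun b => (Q.norm_tmul a b).le

@[simp] lemma L_apply (a b : H) : Q.L a b = Q.tmul a b := rfl

lemma norm_L_le (a : H) : ‖Q.L a‖ ≤ ‖a‖ :=
  LinearMap.mkContinuous_norm_le _ (norm_nonneg _) _

/-- The annihilation operator. -/
def Ls (a : H) : H2 →L[ℂ] H := ContinuousLinearMap.adjoint (Q.L a)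

@[simp] lemma Ls_tmul (a c d : H) : Q.Ls a (Q.tmul c d) = ⟪a, c⟫ • d := by
  apply ext_inner_left ℂ
  intro v
  rw [Ls, ContinuousLinearMap.adjoint_inner_right, L_apply, tmul_inner, inner_smul_right]

lemma norm_Ls_le (a : H) : ‖Q.Ls a‖ ≤ ‖a‖ := by
  rw [Ls, LinearIsometryEquiv.norm_map]
  exact Q.norm_L_le a

lemma inner_Ls (a v : H) (z : H2) : ⟪v, Q.Ls a z⟫ = ⟪Q.tmul a v, z⟫ := by
  rw [Ls, ContinuousLinearMap.adjoint_inner_right, L_apply]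

lemma ext_tmul {G : Type*} [NormedAddCommGroup G] [NormedSpace ℂ G] {S T : H2 →L[ℂ] G}
    (h : ∀ a b, S (Q.tmul a b) = T (Q.tmul a b)) : S = T := by
  refine ContinuousLinearMap.ext_on
    (s := {v : H2 | ∃ a b, v = Q.tmul a b}) ?_ ?_
  · exact Submodule.dense_iff_topologicalClosure_eq_top.2 Q.tmul_total
  · rintro _ ⟨a, b, rfl⟩
    exact h a b

lemma ext_vec {u v : H2} (h : ∀ a b, ⟪Q.tmul a b, u⟫ = ⟪Q.tmul a b, v⟫) : u = v := by
  have : innerSL ℂ u = innerSL ℂ v := by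
    apply Q.ext_tmul
    intro a b
    simp only [innerSL_apply_apply]
    rw [← inner_conj_symm, h, inner_conj_symm]
  apply ext_inner_right ℂ
  intro w
  exact DFunLike.congr_fun this w

lemma star_tensorOp (x y : B H) : star (Q.tensorOp x y) = Q.tensorOp (star x) (star y) := by
  apply Q.ext_tmul
  intro a b
  apply Q.ext_vec
  intro c d
  rw [ContinuousLinearMap.star_eq_adjoint, ContinuousLinearMap.adjoint_inner_right,
    Q.tensorOp_apply, Q.tensorOp_apply, Q.tmul_inner, Q.tmul_inner,
    ContinuousLinearMap.star_eq_adjoint, ContinuousLinearMap.star_eq_adjoint,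
    ContinuousLinearMap.adjoint_inner_right, ContinuousLinearMap.adjoint_inner_right]

lemma tensorOp_mul (x y z w : B H) :
    Q.tensorOp x y * Q.tensorOp z w = Q.tensorOp (x * z) (y * w) := by
  apply Q.ext_tmul
  intro a b
  simp [Q.tensorOp_apply]

lemma tensorOp_one : Q.tensorOp 1 1 = 1 := by
  apply Q.ext_tmul
  intro a b
  simp [Q.tensorOp_apply]

lemma tensorOp_comp_L (x : B H) (a : H) :
    (Q.tensorOp 1 x).comp (Q.L a) = (Q.L a).comp x := by
  ext b
  simp [Q.tensorOp_apply]

lemma Ls_comp_tensorOp (x : B H) (a : H) :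
    (Q.Ls a).comp (Q.tensorOp 1 x) = x.comp (Q.Ls a) := by
  apply Q.ext_tmul
  intro b c
  simp [Q.tensorOp_apply]

/-- The slice by a vector functional. -/
def sl (ξ η : H) (X : B H2) : B H := (Q.Ls η).comp (X.comp (Q.L ξ))

lemma norm_sl_le (ξ η : H) (X : B H2) : ‖Q.sl ξ η X‖ ≤ ‖X‖ * (‖η‖ * ‖ξ‖) := by
  calc _ ≤ ‖Q.Ls η‖ * (‖X‖ * ‖Q.L ξ‖) :=
        (ContinuousLinearMap.opNorm_comp_le _ _).trans
          (mul_le_mul_of_nonneg_left (ContinuousLinearMap.opNorm_comp_le _ _) (norm_nonneg _))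
    _ ≤ ‖η‖ * (‖X‖ * ‖ξ‖) := by
        gcongr
        · exact Q.norm_Ls_le η
        · exact Q.norm_L_le ξ
    _ = _ := by ring

lemma inner_sl (ξ η v w : H) (X : B H2) :
    ⟪v, Q.sl ξ η X w⟫ = ⟪Q.tmul η v, X (Q.tmul ξ w)⟫ := by
  simp [sl, inner_Ls]

lemma star_sl (ξ η : H) (X : B H2) : star (Q.sl ξ η X) = Q.sl η ξ (star X) := by
  ext w
  apply ext_inner_left ℂ
  intro v
  rw [ContinuousLinearMap.star_eq_adjoint, ContinuousLinearMap.adjoint_inner_right, inner_sl,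
    ContinuousLinearMap.star_eq_adjoint, ContinuousLinearMap.adjoint_inner_right,
    ← inner_conj_symm, inner_sl, inner_conj_symm]

lemma sl_W_mem (ξ η : H) : Q.sl ξ η Q.W ∈ Q.Mhat := by
  rw [← Q.Mhat.commutant_commutant, VonNeumannAlgebra.mem_commutant_iff]
  intro b hb
  have hc := Q.W_mem 1 (one_mem _) b hb
  change b.comp ((Q.Ls η).comp (Q.W.comp (Q.L ξ))) = ((Q.Ls η).comp (Q.W.comp (Q.L ξ))).comp b
  rw [← ContinuousLinearMap.comp_assoc, ← Ls_comp_tensorOp, ContinuousLinearMap.comp_assoc,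
    ContinuousLinearMap.comp_assoc, ContinuousLinearMap.comp_assoc, ← tensorOp_comp_L]
  congr 1
  rw [← ContinuousLinearMap.comp_assoc, ← ContinuousLinearMap.comp_assoc]
  congr 1
  exact hc.symm

lemma sl_Wstar_mem (ξ η : H) : Q.sl ξ η (star Q.W) ∈ Q.Mhat := by
  rw [← star_sl]
  exact star_mem (Q.sl_W_mem η ξ)

section basis

variable {ι : Type*} (e : HilbertBasis ι ℂ H)

/-- finite-rank projection -/
def q (F : Finset ι) : B H := ∑ i ∈ F, rankOne ℂ (e i) (e i)

lemma q_apply (F : Finset ι) (v : H) : q e F v = ∑ i ∈ F, ⟪e i, v⟫ • e i := by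
  simp [q, ContinuousLinearMap.sum_apply]

lemma q_star (F : Finset ι) : star (q e F) = q e F := by
  simp [q, ContinuousLinearMap.star_eq_adjoint]

lemma q_mul (F : Finset ι) : q e F * q e F = q e F := by
  classical
  ext v
  rw [ContinuousLinearMap.mul_apply, q_apply e F v, map_sum]
  refine Finset.sum_congr rfl fun i hi => ?_
  rw [map_smul, q_apply]
  congr 1
  simp [orthonormal_iff_ite.1 e.orthonormal, hi]

lemma q_tendsto (v : H) : Tendsto (fun F => q e F v) atTop (𝓝 v) := by
  have := e.hasSum_repr v
  simp only [HasSum, SummationFilter.unconditional_filter, e.repr_apply_apply] at this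
  simpa only [q_apply] using this

lemma tproj {p r : B H} (hp : star p = p) (hp2 : p * p = p) (hr : star r = r) (hr2 : r * r = r) :
    IsStarProjection (Q.tensorOp p r) where
  isIdempotentElem := by rw [IsIdempotentElem, tensorOp_mul, hp2, hr2]
  isSelfAdjoint := by rw [IsSelfAdjoint, star_tensorOp, hp, hr]

lemma tendsto_of_total {α : Type*} {l : Filter α} (T : α → B H2) (hT : ∀ i, ‖T i‖ ≤ 1)
    (h : ∀ a b, Tendsto (fun i => T i (Q.tmul a b)) l (𝓝 (Q.tmul a b))) (z : H2) :
    Tendsto (fun i => T i z) l (𝓝 z) := by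
  have hspan : ∀ w ∈ Submodule.span ℂ {v : H2 | ∃ a b, v = Q.tmul a b},
      Tendsto (fun i => T i w) l (𝓝 w) := by
    intro w hw
    induction hw using Submodule.span_induction with
    | mem x hx => obtain ⟨a, b, rfl⟩ := hx; exact h a b
    | zero => simpa using tendsto_const_nhds
    | add x y _ _ hx hy => simpa using hx.add hy
    | smul c x _ hx => simpa using hx.const_smul c
  have hz : z ∈ closure (Submodule.span ℂ {v : H2 | ∃ a b, v = Q.tmul a b} : Set H2) :=
    (Submodule.dense_iff_topologicalClosure_eq_top.2 Q.tmul_total) z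
  rw [Metric.tendsto_nhds]
  intro ε hε
  obtain ⟨w, hw, hzw⟩ := Metric.mem_closure_iff.1 hz (ε / 3) (by positivity)
  filter_upwards [Metric.tendsto_nhds.1 (hspan w hw) (ε / 3) (by positivity)] with i hi
  have h1 : dist (T i z) (T i w) ≤ dist z w := by
    rw [dist_eq_norm, dist_eq_norm, ← map_sub]
    exact ((T i).le_of_opNorm_le (hT i) _).trans (by simp)
  have h2 := dist_triangle4 (T i z) (T i w) w z
  rw [dist_comm w z] at h2
  linarith

lemma tmul_tendsto {α : Type*} {l : Filter α} {f g : α → H} {a b : H}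
    (hf : Tendsto f l (𝓝 a)) (hg : Tendsto g l (𝓝 b)) :
    Tendsto (fun i => Q.tmul (f i) (g i)) l (𝓝 (Q.tmul a b)) := by
  let T : H →L[ℂ] H →L[ℂ] H2 := LinearMap.mkContinuous₂ Q.tmul 1
    (fun a b => by rw [norm_tmul]; simp)
  exact (T.continuous₂.tendsto (a, b)).comp (hf.prodMk_nhds hg)

lemma tendsto_q1 (z : H2) : Tendsto (fun F => Q.tensorOp (q e F) 1 z) atTop (𝓝 z) := by
  refine Q.tendsto_of_total _ (fun F => ?_) (fun a b => ?_) z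
  · exact (Q.tproj (q_star e F) (q_mul e F) (star_one _) (one_mul _)).norm_le
  · simp only [Q.tensorOp_apply]
    exact Q.tmul_tendsto (q_tendsto e a) tendsto_const_nhds

lemma tendsto_qq (z : H2) : Tendsto (fun F => Q.tensorOp (q e F) (q e F) z) atTop (𝓝 z) := by
  refine Q.tendsto_of_total _ (fun F => ?_) (fun a b => ?_) z
  · exact (Q.tproj (q_star e F) (q_mul e F) (q_star e F) (q_mul e F)).norm_le
  · simp only [Q.tensorOp_apply]
    exact Q.tmul_tendsto (q_tendsto e a) (q_tendsto e b)

/-- A normal functional is a limit of its compressions. -/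
lemma normal_tendsto {f : B H2 →ₗ[ℂ] ℂ} (hf : IsNormalFunctional H2 f) (X : B H2) :
    Tendsto (fun F => f (Q.tensorOp (q e F) (q e F) * X * Q.tensorOp (q e F) (q e F)))
      atTop (𝓝 (f X)) := by
  obtain ⟨α, β, hα, hβ, h⟩ := hf
  have hpr := fun F => Q.tproj (q_star e F) (q_mul e F) (q_star e F) (q_mul e F)
  simp only [← (h _).tsum_eq]
  refine tendsto_tsum_of_dominated_convergence
    (bound := fun n => ‖X‖ * (‖α n‖ ^ 2 + ‖β n‖ ^ 2)) ((hα.add hβ).mul_left _) ?_ ?_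
  · intro n
    have : ∀ F, ⟪β n, (Q.tensorOp (q e F) (q e F) * X * Q.tensorOp (q e F) (q e F)) (α n)⟫
        = ⟪Q.tensorOp (q e F) (q e F) (β n), X (Q.tensorOp (q e F) (q e F) (α n))⟫ := by
      intro F
      have hs := (hpr F).isSelfAdjoint.star_eq
      rw [ContinuousLinearMap.star_eq_adjoint] at hs
      conv_rhs => rw [← hs, ContinuousLinearMap.adjoint_inner_left]
      rw [hs]
      rfl
    simp only [this]
    exact (Q.tendsto_qq e _).inner ((X.continuous.tendsto _).comp (Q.tendsto_qq e _))
  · refine Eventually.of_forall fun F n => ?_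
    refine (norm_inner_le_norm _ _).trans ?_
    have h1 : ‖(Q.tensorOp (q e F) (q e F) * X * Q.tensorOp (q e F) (q e F)) (α n)‖
        ≤ ‖X‖ * ‖α n‖ := by
      refine ContinuousLinearMap.le_of_opNorm_le _ ?_ _
      refine (norm_mul_le _ _).trans ?_
      refine (mul_le_mul (norm_mul_le _ _) (hpr F).norm_le (norm_nonneg _) (by positivity)).trans ?_
      rw [mul_one]
      exact mul_le_of_le_one_left (norm_nonneg _) (hpr F).norm_le
    calc _ ≤ ‖β n‖ * (‖X‖ * ‖α n‖) := by gcongr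
      _ = ‖X‖ * (‖α n‖ * ‖β n‖) := by ring
      _ ≤ _ := by
        gcongr
        nlinarith [sq_nonneg (‖α n‖ - ‖β n‖), sq_nonneg (‖α n‖), sq_nonneg (‖β n‖)]

lemma unit_compress (i j k l : H) (X : B H2) :
    Q.tensorOp (rankOne ℂ i i) (rankOne ℂ j j) * X * Q.tensorOp (rankOne ℂ k k) (rankOne ℂ l l)
      = ⟪Q.tmul i j, X (Q.tmul k l)⟫ • Q.tensorOp (rankOne ℂ i k) (rankOne ℂ j l) := by
  have h : ∀ z, Q.tensorOp (rankOne ℂ i i) (rankOne ℂ j j) z = ⟪Q.tmul i j, z⟫ • Q.tmul i j := by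
    intro z
    have : Q.tensorOp (rankOne ℂ i i) (rankOne ℂ j j) = rankOne ℂ (Q.tmul i j) (Q.tmul i j) := by
      apply Q.ext_tmul
      intro a b
      simp [Q.tensorOp_apply, Q.tmul_inner, smul_smul, mul_comm]
    rw [this]; rfl
  apply Q.ext_tmul
  intro a b
  simp only [ContinuousLinearMap.mul_apply, h, ContinuousLinearMap.smul_apply, Q.tensorOp_apply,
    rankOne_apply, map_smul, LinearMap.smul_apply, smul_smul, inner_smul_right]
  congr 1
  ring

/-- Normal functionals on `B(H2)` are determined on elementary tensors. -/
lemma normal_ext {f g : B H2 →ₗ[ℂ] ℂ} (hf : IsNormalFunctional H2 f)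
    (hg : IsNormalFunctional H2 g)
    (h : ∀ x y, f (Q.tensorOp x y) = g (Q.tensorOp x y)) : f = g := by
  obtain ⟨w, e, -⟩ := exists_hilbertBasis ℂ H
  ext X
  refine tendsto_nhds_unique (Q.normal_tendsto e hf X) ?_
  refine (Q.normal_tendsto e hg X).congr fun F => ?_
  have : Q.tensorOp (q e F) (q e F) = ∑ i ∈ F, ∑ j ∈ F,
      Q.tensorOp (rankOne ℂ (e i) (e i)) (rankOne ℂ (e j) (e j)) := by
    rw [Finset.sum_comm]
    simp [q, map_sum, LinearMap.sum_apply]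
  simp only [this, Finset.sum_mul, Finset.mul_sum, map_sum, unit_compress, map_smul, h]

end basis

lemma summable_mul {ξ η : ℕ → H} (hξ : Summable fun n => ‖ξ n‖ ^ 2)
    (hη : Summable fun n => ‖η n‖ ^ 2) : Summable fun n => ‖η n‖ * ‖ξ n‖ := by
  refine Summable.of_nonneg_of_le (fun n => by positivity) (fun n => ?_) (hη.add hξ)
  nlinarith [sq_nonneg (‖ξ n‖ - ‖η n‖), sq_nonneg (‖ξ n‖), sq_nonneg (‖η n‖)]

lemma summable_sl {ξ η : ℕ → H} (hξ : Summable fun n => ‖ξ n‖ ^ 2)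
    (hη : Summable fun n => ‖η n‖ ^ 2) (X : B H2) : Summable fun n => Q.sl (ξ n) (η n) X :=
  Summable.of_norm_bounded ((summable_mul hξ hη).mul_left ‖X‖)
    fun _ => Q.norm_sl_le _ _ _

lemma sliceL_hasSum {ω : B H →ₗ[ℂ] ℂ} {ξ η : ℕ → H} (hξ : Summable fun n => ‖ξ n‖ ^ 2)
    (hη : Summable fun n => ‖η n‖ ^ 2) (hω : ∀ x : B H, HasSum (fun n => ⟪η n, x (ξ n)⟫) (ω x))
    (X : B H2) : HasSum (fun n => Q.sl (ξ n) (η n) X) (Q.sliceL ω X) := by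
  have hs := Q.summable_sl hξ hη
  have hsum : ∀ X v w, HasSum (fun n => ⟪Q.tmul (η n) v, X (Q.tmul (ξ n) w)⟫)
      ⟪v, (∑' n, Q.sl (ξ n) (η n) X) w⟫ := by
    intro X v w
    have := (((hs X).hasSum.mapL (ContinuousLinearMap.apply ℂ H w))).mapL (innerSL ℂ v)
    simpa [inner_sl] using this
  suffices h : Q.sliceL ω X = ∑' n, Q.sl (ξ n) (η n) X by
    rw [h]; exact (hs X).hasSum
  ext w
  apply ext_inner_left ℂ
  intro v
  have hc := Q.sliceL_char ω X w v
  change ⟪v, Q.sliceL ω X w⟫ = _ at hc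
  rw [hc]
  let g : B H2 →ₗ[ℂ] ℂ :=
    { toFun := fun X => ⟪v, (∑' n, Q.sl (ξ n) (η n) X) w⟫
      map_add' := fun X Y => by
        refine (hsum (X + Y) v w).unique ?_
        simpa [inner_add_right] using (hsum X v w).add (hsum Y v w)
      map_smul' := fun c X => by
        refine (hsum (c • X) v w).unique ?_
        simpa [inner_smul_right] using (hsum X v w).mul_left c }
  have hg : IsNormalFunctional H2 g := by
    refine ⟨fun n => Q.tmul (ξ n) w, fun n => Q.tmul (η n) v, ?_, ?_, fun X => hsum X v w⟩
    · simp only [norm_tmul, mul_pow]; exact hξ.mul_right _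
    · simp only [norm_tmul, mul_pow]; exact hη.mul_right _
  have hf : IsNormalFunctional H2 (Q.funcTensor ω (vecFunctional H w v)) := by
    apply Q.funcTensor_normal _ _ ⟨ξ, η, hξ, hη, hω⟩
    refine ⟨fun n => if n = 0 then w else 0, fun n => if n = 0 then v else 0, ?_, ?_, ?_⟩
    · exact summable_of_ne_finset_zero (s := {0}) (by intro b hb; simp at hb; simp [hb])
    · exact summable_of_ne_finset_zero (s := {0}) (by intro b hb; simp at hb; simp [hb])
    · intro x
      have := hasSum_single (f := fun n : ℕ => ⟪if n = 0 then v else 0, x (if n = 0 then w else 0)⟫) 0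
        (by intro b hb; simp [hb])
      simpa [vecFunctional] using this
  have := Q.normal_ext hf hg (fun x y => by
    rw [Q.funcTensor_elem]
    refine HasSum.unique ?_ (hsum _ v w)
    simp only [Q.tensorOp_apply, Q.tmul_inner]
    exact (hω x).mul_right _)
  rw [this]
  rfl

/-- Key estimate: `E(A X)` is small when `A A*` is small at `v`. -/
lemma key_bound {N : VonNeumannAlgebra H} {E : B H →ₗ[ℂ] B H} {K : ℝ} (hK : 0 ≤ K)
    (hE : ∀ x, ‖E x‖ ≤ K * ‖x‖)
    (hmod : ∀ a ∈ N, ∀ b ∈ N, ∀ x : B H, E (a * x * b) = a * E x * b)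
    (A : H2 →L[ℂ] H) (X : H →L[ℂ] H2) (hA : A.comp (ContinuousLinearMap.adjoint A) ∈ N)
    (v w : H) :
    ‖⟪v, E (A.comp X) w⟫‖ ≤ ‖ContinuousLinearMap.adjoint A v‖ * (K * ‖X‖ * ‖w‖) := by
  set As := ContinuousLinearMap.adjoint A with hAs
  have main : ∀ ε : ℝ, 0 < ε →
      ‖⟪v, E (A.comp X) w⟫‖ ≤ √(‖As v‖ ^ 2 + ε * ‖v‖ ^ 2) * (K * ‖X‖ * ‖w‖) := by
    intro ε hε
    have hR : (0 : B H) ≤ A.comp As := by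
      rw [ContinuousLinearMap.nonneg_iff_isPositive]
      exact ContinuousLinearMap.isPositive_self_comp_adjoint A
    set T : B H := A.comp As + algebraMap ℝ (B H) ε with hT
    have hle : algebraMap ℝ (B H) ε ≤ T := le_add_of_nonneg_left hR
    have hTpos : IsStrictlyPositive T := by
      refine IsStrictlyPositive.of_le ?_ hle
      exact (IsStrictlyPositive.iff_of_unital).2
        ⟨algebraMap_nonneg _ hε.le, (IsUnit.mk0 ε hε.ne').map (algebraMap ℝ (B H))⟩
    have hT0 : 0 ≤ T := hTpos.nonneg
    set S : B H := CFC.sqrt T with hS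
    have hSS : S * S = T := CFC.sqrt_mul_sqrt_self T hT0
    have hSsa : ContinuousLinearMap.adjoint S = S := by
      rw [← ContinuousLinearMap.star_eq_adjoint]
      exact (CFC.sqrt_nonneg T).isSelfAdjoint.star_eq
    have hSu : IsUnit S := CFC.isUnit_sqrt_iff_isStrictlyPositive.2 hTpos
    have hTN : T ∈ N := by
      refine add_mem hA ?_
      have : algebraMap ℝ (B H) ε = algebraMap ℂ (B H) (ε : ℂ) := by
        ext; simp [Algebra.algebraMap_eq_smul_one]
      rw [this]
      exact algebraMap_mem N.toStarSubalgebra _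
    have hSN : S ∈ N := by
      rw [← N.commutant_commutant, VonNeumannAlgebra.mem_commutant_iff]
      intro g hg
      have hc : Commute T g := VonNeumannAlgebra.mem_commutant_iff.1 hg T hTN
      exact (Commute.cfcₙ_nnreal hc _).symm
    have hnS : ∀ u, ‖S u‖ ^ 2 = ‖As u‖ ^ 2 + ε * ‖u‖ ^ 2 := by
      intro u
      have h1 : ⟪S u, S u⟫ = ⟪u, T u⟫ := by
        rw [← hSS]
        conv_lhs => rw [← hSsa, ContinuousLinearMap.adjoint_inner_left, hSsa]
        rfl
      have h2 : ⟪u, T u⟫ = ⟪As u, As u⟫ + ε * ⟪u, u⟫ := by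
        rw [hT, ContinuousLinearMap.add_apply, inner_add_right, ContinuousLinearMap.comp_apply,
          ← ContinuousLinearMap.adjoint_inner_left, Algebra.algebraMap_eq_smul_one]
        simp [inner_smul_right_eq_smul, ← hAs]
      rw [h2, inner_self_eq_norm_sq_to_K, inner_self_eq_norm_sq_to_K,
        inner_self_eq_norm_sq_to_K] at h1
      have h5 : ((‖S u‖ ^ 2 : ℝ) : ℂ) = ((‖As u‖ ^ 2 + ε * ‖u‖ ^ 2 : ℝ) : ℂ) := by
        push_cast
        exact h1
      exact Complex.ofReal_injective h5
    obtain ⟨u, hu⟩ := hSu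
    set Si : B H := ((u⁻¹ : (B H)ˣ) : B H) with hSi
    have hSSi : S * Si = 1 := by rw [← hu, hSi]; simp
    have hSiA : ‖As.comp (ContinuousLinearMap.adjoint Si)‖ ≤ 1 := by
      refine ContinuousLinearMap.opNorm_le_bound _ zero_le_one fun z => ?_
      have hz : S (ContinuousLinearMap.adjoint Si z) = z := by
        have h3 : S * star Si = 1 := by
          have : star (Si * S) = 1 := by rw [← hu, hSi]; simp
          rw [star_mul, ContinuousLinearMap.star_eq_adjoint S, hSsa] at this
          exact this
        exact DFunLike.congr_fun h3 z
      have h4 := hnS (ContinuousLinearMap.adjoint Si z)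
      rw [hz] at h4
      rw [one_mul, ContinuousLinearMap.comp_apply]
      refine (sq_le_sq₀ (norm_nonneg _) (norm_nonneg _)).1 ?_
      rw [h4]
      have : 0 ≤ ε * ‖ContinuousLinearMap.adjoint Si z‖ ^ 2 := by positivity
      linarith
    have hSiA' : ‖Si.comp A‖ ≤ 1 := by
      have : Si.comp A = ContinuousLinearMap.adjoint
          (As.comp (ContinuousLinearMap.adjoint Si)) := by
        rw [ContinuousLinearMap.adjoint_comp, hAs, ContinuousLinearMap.adjoint_adjoint,
          ContinuousLinearMap.adjoint_adjoint]
      rw [this, LinearIsometryEquiv.norm_map]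
      exact hSiA
    have hfac : A.comp X = S * ((Si.comp A).comp X) * 1 := by
      have : S * ((Si.comp A).comp X) = (S * Si).comp (A.comp X) := rfl
      rw [mul_one, this, hSSi]
      rfl
    rw [hfac, hmod S hSN 1 (one_mem _), mul_one, ContinuousLinearMap.mul_apply,
      ← ContinuousLinearMap.adjoint_inner_left, hSsa]
    refine (norm_inner_le_norm _ _).trans ?_
    have hy : ‖(Si.comp A).comp X‖ ≤ ‖X‖ :=
      (ContinuousLinearMap.opNorm_comp_le _ _).trans
        (mul_le_of_le_one_left (norm_nonneg _) hSiA')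
    rw [← hnS, Real.sqrt_sq (norm_nonneg _)]
    gcongr
    refine ContinuousLinearMap.le_of_opNorm_le _ ((hE _).trans ?_) _
    gcongr
  have hlim : Tendsto (fun ε : ℝ => √(‖As v‖ ^ 2 + ε * ‖v‖ ^ 2) * (K * ‖X‖ * ‖w‖)) (𝓝[>] 0)
      (𝓝 (√(‖As v‖ ^ 2 + 0 * ‖v‖ ^ 2) * (K * ‖X‖ * ‖w‖))) := by
    apply Tendsto.mono_left _ nhdsWithin_le_nhds
    apply Continuous.tendsto (f := fun ε : ℝ => √(‖As v‖ ^ 2 + ε * ‖v‖ ^ 2) * (K * ‖X‖ * ‖w‖))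
    fun_prop
  rw [zero_mul, add_zero, Real.sqrt_sq (norm_nonneg _)] at hlim
  refine ge_of_tendsto hlim ?_
  filter_upwards [self_mem_nhdsWithin] with ε hε using main ε hε

lemma tensor_q_eq {ι : Type*} (e : HilbertBasis ι ℂ H) (F : Finset ι) :
    Q.tensorOp (q e F) 1 = ∑ i ∈ F, (Q.L (e i)).comp (Q.Ls (e i)) := by
  apply Q.ext_tmul
  intro a b
  simp [Q.tensorOp_apply, q_apply, map_sum, LinearMap.sum_apply, ContinuousLinearMap.sum_apply]

/-- compressed slices as finite sums -/
lemma sl_compress {ι : Type*} (e : HilbertBasis ι ℂ H) (F : Finset ι) (ξ η : H) (x : B H) :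
    Q.sl ξ η (star Q.W * Q.tensorOp (q e F) 1 * Q.tensorOp 1 x * Q.W) =
      ∑ i ∈ F, Q.sl (e i) η (star Q.W) * x * Q.sl ξ (e i) Q.W := by
  rw [tensor_q_eq]
  ext w
  have h := fun i z => DFunLike.congr_fun (Q.Ls_comp_tensorOp x (e i)) z
  simp only [ContinuousLinearMap.comp_apply] at h
  simp [sl, ContinuousLinearMap.sum_apply, map_sum, h]

lemma sl_sub (ξ η : H) (X Y : B H2) : Q.sl ξ η (X - Y) = Q.sl ξ η X - Q.sl ξ η Y := by
  ext w; simp [sl]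

theorem sl_Delta_comm {E : B H →ₗ[ℂ] B H} {K : ℝ} (hK : 0 ≤ K)
    (hE : ∀ x, ‖E x‖ ≤ K * ‖x‖)
    (hmod : ∀ a ∈ Q.Mhat, ∀ b ∈ Q.Mhat, ∀ x : B H, E (a * x * b) = a * E x * b)
    (x : B H) (ξ η : H) : Q.sl ξ η (Q.Delta (E x)) = E (Q.sl ξ η (Q.Delta x)) := by
  obtain ⟨ι, e, -⟩ := exists_hilbertBasis ℂ H
  ext w
  apply ext_inner_left ℂ
  intro v
  -- compressions converge on the left-hand side
  have hl : Tendsto (fun F => ⟪v, Q.sl ξ η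
      (star Q.W * Q.tensorOp (q e F) 1 * Q.tensorOp 1 (E x) * Q.W) w⟫) atTop
      (𝓝 ⟪v, Q.sl ξ η (Q.Delta (E x)) w⟫) := by
    simp only [inner_sl]
    refine Tendsto.inner tendsto_const_nhds ?_
    exact ((star Q.W).continuous.tendsto _).comp (Q.tendsto_q1 e _)
  refine tendsto_nhds_unique hl ?_
  have heq : ∀ F, Q.sl ξ η (star Q.W * Q.tensorOp (q e F) 1 * Q.tensorOp 1 (E x) * Q.W) =
      E (Q.sl ξ η (star Q.W * Q.tensorOp (q e F) 1 * Q.tensorOp 1 x * Q.W)) := by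
    intro F
    rw [sl_compress, sl_compress, map_sum]
    refine Finset.sum_congr rfl fun i _ => ?_
    rw [hmod _ (Q.sl_Wstar_mem _ _) _ (Q.sl_W_mem _ _)]
  simp only [heq]
  rw [tendsto_iff_norm_sub_tendsto_zero]
  set X : H →L[ℂ] H2 := (Q.tensorOp 1 x).comp (Q.W.comp (Q.L ξ)) with hX
  let A : Finset ι → (H2 →L[ℂ] H) := fun F =>
    (Q.Ls η).comp ((star Q.W).comp (1 - Q.tensorOp (q e F) 1))
  have hadj : ∀ F, ContinuousLinearMap.adjoint (A F) =
      (1 - Q.tensorOp (q e F) 1).comp (Q.W.comp (Q.L η)) := by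
    intro F
    have hs := (Q.tproj (q_star e F) (q_mul e F) (star_one _) (one_mul _)).isSelfAdjoint
    have hs' : ContinuousLinearMap.adjoint (1 - Q.tensorOp (q e F) 1) =
      1 - Q.tensorOp (q e F) 1 := by
      rw [← ContinuousLinearMap.star_eq_adjoint, star_sub, star_one, hs.star_eq]
    simp only [A]
    rw [ContinuousLinearMap.adjoint_comp, ContinuousLinearMap.adjoint_comp, hs', Ls,
      ContinuousLinearMap.adjoint_adjoint, ContinuousLinearMap.star_eq_adjoint,
      ContinuousLinearMap.adjoint_adjoint, ContinuousLinearMap.comp_assoc]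
  have hdiff : ∀ F, Q.sl ξ η (Q.Delta x) -
      Q.sl ξ η (star Q.W * Q.tensorOp (q e F) 1 * Q.tensorOp 1 x * Q.W) = (A F).comp X := by
    intro F
    rw [← sl_sub]
    have : Q.Delta x - star Q.W * Q.tensorOp (q e F) 1 * Q.tensorOp 1 x * Q.W =
      star Q.W * (1 - Q.tensorOp (q e F) 1) * Q.tensorOp 1 x * Q.W := by
      rw [Delta]; noncomm_ring
    rw [this]
    rfl
  have hmem : ∀ F, (A F).comp (ContinuousLinearMap.adjoint (A F)) ∈ Q.Mhat := by
    intro F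
    rw [hadj]
    have hid := (Q.tproj (q_star e F) (q_mul e F) (star_one _) (one_mul _)).isIdempotentElem
    have h1 : (A F).comp ((1 - Q.tensorOp (q e F) 1).comp (Q.W.comp (Q.L η))) =
        Q.sl η η (star Q.W * ((1 - Q.tensorOp (q e F) 1) * (1 - Q.tensorOp (q e F) 1)) * Q.W) := rfl
    have h2 : star Q.W * ((1 - Q.tensorOp (q e F) 1) * (1 - Q.tensorOp (q e F) 1)) * Q.W =
        1 - star Q.W * Q.tensorOp (q e F) 1 * Q.tensorOp 1 1 * Q.W := by
      rw [hid.one_sub.eq, tensorOp_one, mul_one, mul_sub, mul_one, sub_mul, Q.W_unitary_l]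
    rw [h1, h2, sl_sub, sl_compress]
    refine sub_mem ?_ (sum_mem fun i _ => ?_)
    · have : Q.sl η η 1 = algebraMap ℂ (B H) ⟪η, η⟫ := by
        ext z; simp [sl, Algebra.algebraMap_eq_smul_one]
      rw [this]
      exact algebraMap_mem Q.Mhat.toStarSubalgebra _
    · rw [mul_one]
      exact mul_mem (Q.sl_Wstar_mem _ _) (Q.sl_W_mem _ _)
  have hb : ∀ F, ‖⟪v, E (Q.sl ξ η (star Q.W * Q.tensorOp (q e F) 1 * Q.tensorOp 1 x * Q.W)) w⟫ -
      ⟪v, E (Q.sl ξ η (Q.Delta x)) w⟫‖ ≤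
      ‖(1 - Q.tensorOp (q e F) 1) (Q.W (Q.tmul η v))‖ * (K * ‖X‖ * ‖w‖) := by
    intro F
    have := key_bound hK hE hmod (A F) X (hmem F) v w
    rw [hadj] at this
    rw [norm_sub_rev, ← inner_sub_right, ← ContinuousLinearMap.sub_apply, ← map_sub, hdiff]
    exact this
  refine squeeze_zero (fun _ => norm_nonneg _) hb ?_
  have hz := ((Q.tendsto_q1 e (Q.W (Q.tmul η v))).const_sub (Q.W (Q.tmul η v))).norm.mul_const
    (K * ‖X‖ * ‖w‖)
  simpa using hz

end LCQG

end Aux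

/-- **Theorem 2 (Sołtan–Viselter).** Let `𝔾` be a locally compact quantum group and let
`E : B(L²(𝔾)) → B(L²(𝔾))` be a completely bounded `L∞(𝔾̂)`-bimodule map.  Then
`(ω ⊗ id)Δ̄(E(x)) = E((ω ⊗ id)Δ̄(x))` for every `x ∈ B(L²(𝔾))` and every normal
functional `ω ∈ B(L²(𝔾))_*`, where `Δ̄(x) = W*(1 ⊗ x)W`. -/
theorem cb_bimodule_map_commutes_with_slices (Q : LCQG H H2)
    (E : B H →ₗ[ℂ] B H) (hcb : CompletelyBounded H E)
    (hmod : ∀ a ∈ Q.Mhat, ∀ b ∈ Q.Mhat, ∀ x : B H, E (a * x * b) = a * E x * b)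
    (x : B H) (ω : B H →ₗ[ℂ] ℂ) (hω : IsNormalFunctional H ω) :
    Q.sliceL ω (Q.Delta (E x)) = E (Q.sliceL ω (Q.Delta x)) := by
  obtain ⟨K, hK, hE⟩ := hcb.bdd
  obtain ⟨ξ, η, hξ, hη, h⟩ := hω
  have h1 := Q.sliceL_hasSum hξ hη h (Q.Delta (E x))
  have h2 := (Q.sliceL_hasSum hξ hη h (Q.Delta x)).mapL (E.mkContinuous K hE)
  simp only [Q.sl_Delta_comm hK hE hmod] at h1
  exact h1.unique h2

end LCQGNote
end
end

section
/- Let 𝔾 be a locally compact quantum group and E a conditional expectation of B(L²(𝔾)) onto L∞(𝔾̂) mapping L∞(𝔾) into the center of L∞(𝔾̂). Then for any state ρ ∈ L∞(𝔾̂)*, the functional m := ρ ∘ E|_{L∞(𝔾)} is a left-invariant mean on L∞(𝔾); in particular 𝔾 is amenable. -/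
/-!
Common framework: an axiomatization of locally compact quantum groups (in the von Neumann
algebraic setting of Kustermans–Vaes) acting on a Hilbert space `H = L²(𝔾)`.

Since completed Hilbert space tensor products are not available, the tensor square
`H2 = L²(𝔾) ⊗ L²(𝔾)` is axiomatized: a Hilbert space together with a bilinear map
`tmul` with total range satisfying `⟪a ⊗ b, c ⊗ d⟫ = ⟪a, c⟫⟪b, d⟫`, the induced tensor
product of operators `tensorOp`, tensor products `funcTensor` of normal functionals,
and the slice maps `sliceL = ω ⊗ id`, `sliceR = id ⊗ ω`.

Normal functionals (elements of the predual `B(H)_*`) are characterized concretely: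
`ω(x) = ∑ ⟪ηₙ, x ξₙ⟫` with `∑‖ξₙ‖² , ∑‖ηₙ‖² < ∞`.

Membership of an operator `X` on `H2` in a spatial tensor product `P ⊗̄ Q` of von Neumann
algebras is encoded, via the commutation theorem, as: `X` commutes with all `a' ⊗ b'`
with `a' ∈ P'`, `b' ∈ Q'`.

A locally compact quantum group is recorded through its left regular co-representation
`W ∈ L∞(𝔾) ⊗̄ L∞(𝔾̂)` and right regular co-representation `V ∈ L∞(𝔾̂)' ⊗̄ L∞(𝔾)`,
which implement the co-multiplication: `Δ(x) = W*(1 ⊗ x)W = V(x ⊗ 1)V*` for `x ∈ L∞(𝔾)`;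
`Δ̄(x) := W*(1 ⊗ x)W` for arbitrary `x ∈ B(H)` is the canonical normal extension of `Δ`.
-/

noncomputable section

open scoped ComplexOrder ComplexInnerProductSpace

namespace LCQGNote

variable (H H2 : Type*)
  [NormedAddCommGroup H] [InnerProductSpace ℂ H] [CompleteSpace H]
  [NormedAddCommGroup H2] [InnerProductSpace ℂ H2] [CompleteSpace H2]

section Tomiyama
variable {A : Type*} [CStarAlgebra A] [PartialOrder A] [StarOrderedRing A]

theorem pow_mul_pow_nonneg_aux {h : A} (h0 : 0 ≤ h) (h1 : h ≤ 1) (k m : ℕ) :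
    0 ≤ h ^ k * (1 - h) ^ m := by
  have hc : Commute h (1 - h) := (Commute.one_right h).sub_right (Commute.refl h)
  have hp : ∀ (a : A), 0 ≤ a → ∀ n : ℕ, 0 ≤ a ^ n := by
    intro a ha n
    induction n with
    | zero => simp
    | succ n ih => rw [pow_succ]; exact Commute.mul_nonneg ih ha (Commute.pow_self a n)
  exact Commute.mul_nonneg (hp h h0 k) (hp _ (sub_nonneg.2 h1) m) (hc.pow_pow k m)

theorem kadison_aux (E : A →ₗ[ℂ] A) (hpos : ∀ x, 0 ≤ x → 0 ≤ E x) (hone : E 1 = 1)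
    {h : A} (h0 : 0 ≤ h) (h1 : h ≤ 1) (n : ℕ) :
    0 ≤ (n * (n - 1)) • E (h ^ 2) + n • E h - (n * n) • (E h * E h) := by
  set b : ℕ → A := fun k => Polynomial.aeval h (bernsteinPolynomial ℤ n k) with hb
  have hbpos : ∀ k, 0 ≤ b k := by
    intro k
    simp only [hb, bernsteinPolynomial, map_mul, map_pow, map_natCast, Polynomial.aeval_X, map_sub,
      map_one, mul_assoc]
    rw [← nsmul_eq_mul]
    exact nsmul_nonneg (pow_mul_pow_nonneg_aux h0 h1 _ _) _
  have e0 : ∑ k ∈ Finset.range (n + 1), E (b k) = 1 := by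
    have := congrArg (fun p => E (Polynomial.aeval h p)) (bernsteinPolynomial.sum ℤ n)
    simpa [hone] using this
  have e1 : ∑ k ∈ Finset.range (n + 1), k • E (b k) = n • E h := by
    have := congrArg (fun p => E (Polynomial.aeval h p)) (bernsteinPolynomial.sum_smul ℤ n)
    simp only [map_sum, map_nsmul, Polynomial.aeval_X] at this
    exact this
  have e2 : ∑ k ∈ Finset.range (n + 1), (k * (k - 1)) • E (b k) = (n * (n - 1)) • E (h ^ 2) := by
    have := congrArg (fun p => E (Polynomial.aeval h p)) (bernsteinPolynomial.sum_mul_smul ℤ n)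
    simp only [map_sum, map_nsmul, Polynomial.aeval_X, map_pow] at this
    exact this
  have e3 : ∑ k ∈ Finset.range (n + 1), (k * k) • E (b k) = (n * (n - 1)) • E (h ^ 2) + n • E h := by
    rw [← e1, ← e2, ← Finset.sum_add_distrib]
    refine Finset.sum_congr rfl fun k _ => ?_
    rw [← add_smul]
    congr 1
    cases k with
    | zero => rfl
    | succ k => simp; ring
  have hS : IsSelfAdjoint (E h) := IsSelfAdjoint.of_nonneg (hpos _ h0)
  set S := E h
  have key : 0 ≤ ∑ k ∈ Finset.range (n + 1), (star ((k : A) - n • S)) * E (b k) * ((k : A) - n • S) :=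
    Finset.sum_nonneg fun k _ => star_left_conjugate_nonneg (hpos _ (hbpos k)) _
  have e4 : ∑ k ∈ Finset.range (n + 1), (star ((k : A) - n • S)) * E (b k) * ((k : A) - n • S)
      = ∑ k ∈ Finset.range (n + 1), (k * k) • E (b k)
        - (n • S) * ∑ k ∈ Finset.range (n + 1), k • E (b k)
        - (∑ k ∈ Finset.range (n + 1), k • E (b k)) * (n • S)
        + (n • S) * (∑ k ∈ Finset.range (n + 1), E (b k)) * (n • S) := by
    simp only [Finset.mul_sum, Finset.sum_mul, ← Finset.sum_sub_distrib, ← Finset.sum_add_distrib]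
    refine Finset.sum_congr rfl fun k _ => ?_
    have hs : star (n • S) = n • S := by rw [star_nsmul, hS.star_eq]
    simp only [star_sub, star_natCast, hs, sub_mul, mul_sub]
    simp only [nsmul_eq_mul]
    have : E (b k) * (k : A) = k * E (b k) := (Nat.cast_commute k _).symm
    push_cast
    simp only [mul_assoc, this]
    have h2 : ∀ x : A, E (b k) * ((k : A) * x) = k * (E (b k) * x) := fun x => by
      rw [← mul_assoc, this, mul_assoc]
    abel
  rw [e4, e3, e1, e0] at key
  convert key using 1
  simp only [mul_one, smul_mul_smul_comm]
  abel

theorem kadison01 (E : A →ₗ[ℂ] A) (hpos : ∀ x, 0 ≤ x → 0 ≤ E x) (hone : E 1 = 1)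
    {h : A} (h0 : 0 ≤ h) (h1 : h ≤ 1) : 0 ≤ E (h ^ 2) - E h * E h := by
  have hn : ∀ n : ℕ, 0 ≤ E (h ^ 2) - E h * E h + (1 / ((n : ℝ) + 1)) • (E h - E (h ^ 2)) := by
    intro n
    have := kadison_aux E hpos hone h0 h1 (n + 1)
    have h2 := smul_nonneg (a := (1 / ((n : ℝ) + 1)) ^ 2) (by positivity) this
    convert h2 using 1
    simp only [Nat.add_sub_cancel, ← Nat.cast_smul_eq_nsmul ℝ]
    push_cast
    have hne : (n : ℝ) + 1 ≠ 0 := by positivity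
    match_scalars <;> (field_simp; try ring)
  have ht : Filter.Tendsto (fun n : ℕ => E (h ^ 2) - E h * E h + (1 / ((n : ℝ) + 1)) • (E h - E (h ^ 2)))
      Filter.atTop (nhds (E (h ^ 2) - E h * E h + (0 : ℝ) • (E h - E (h ^ 2)))) :=
    tendsto_const_nhds.add (tendsto_one_div_add_atTop_nhds_zero_nat.smul_const _)
  have := ge_of_tendsto' ht hn
  simpa using this


theorem kadison (E : A →ₗ[ℂ] A) (hpos : ∀ x, 0 ≤ x → 0 ≤ E x) (hone : E 1 = 1)
    {h : A} (hh : IsSelfAdjoint h) : 0 ≤ E (h * h) - E h * E h := by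
  set c : ℝ := ‖h‖ + 1 with hc
  have hcpos : 0 < c := by positivity
  have hu : h ≤ c • (1 : A) := by
    rw [← Algebra.algebraMap_eq_smul_one]
    exact (IsSelfAdjoint.le_algebraMap_norm_self hh).trans (algebraMap_mono A (by simp [hc]))
  have hl : - (c • (1 : A)) ≤ h := by
    rw [← Algebra.algebraMap_eq_smul_one]
    refine le_trans ?_ (IsSelfAdjoint.neg_algebraMap_norm_le_self hh)
    rw [neg_le_neg_iff]
    exact algebraMap_mono A (by simp [hc])
  set k : A := (2 * c)⁻¹ • (h + c • (1 : A)) with hk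
  have k0 : 0 ≤ k := smul_nonneg (by positivity) (by simpa using add_le_add_left hl (c • (1 : A)))
  have k1 : k ≤ 1 := by
    have : 0 ≤ (2 * c)⁻¹ • (c • (1 : A) - h) := smul_nonneg (by positivity) (sub_nonneg.2 hu)
    rw [← sub_nonneg]
    convert this using 1
    rw [hk]
    match_scalars <;> (field_simp; try ring)
  have := kadison01 E hpos hone k0 k1
  have h2 := smul_nonneg (a := (2 * c) ^ 2) (by positivity) this
  convert h2 using 1
  have e1 : E k = (2 * c)⁻¹ • (E h + c • (1 : A)) := by
    rw [hk, LinearMap.map_smul_of_tower, map_add, LinearMap.map_smul_of_tower, hone]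
  have e2 : k ^ 2 = ((2 * c)⁻¹) ^ 2 • (h * h + (2 * c) • h + (c ^ 2) • (1 : A)) := by
    rw [hk, smul_pow, sq (h + _)]
    congr 1
    simp only [add_mul, mul_add, smul_mul_assoc, mul_smul_comm, one_mul, mul_one]
    module
  have e3 : E (k ^ 2) = ((2 * c)⁻¹) ^ 2 • (E (h * h) + (2 * c) • E h + (c ^ 2) • (1 : A)) := by
    rw [e2, LinearMap.map_smul_of_tower, map_add, map_add, LinearMap.map_smul_of_tower,
      LinearMap.map_smul_of_tower, hone]
  rw [e1, e3]
  simp only [add_mul, mul_add, smul_mul_assoc, mul_smul_comm, one_mul, mul_one]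
  match_scalars <;> field_simp <;> ring

theorem pos_cont (E : A →ₗ[ℂ] A) (hpos : ∀ x, 0 ≤ x → 0 ≤ E x) :
    ∃ C : ℝ, ∀ x, ‖E x‖ ≤ C * ‖x‖ := by
  have hm : Monotone E := fun a b hab => by
    have := hpos (b - a) (sub_nonneg.2 hab)
    rw [map_sub] at this
    exact sub_nonneg.1 this
  let f : A →ₚ[ℂ] A := { E with monotone' := hm }
  obtain ⟨C, h⟩ := f.exists_norm_apply_le
  exact ⟨C, h⟩

theorem pos_star (E : A →ₗ[ℂ] A) (hpos : ∀ x, 0 ≤ x → 0 ≤ E x) (x : A) :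
    E (star x) = star (E x) := by
  obtain ⟨y, hy, -, rfl⟩ := CStarAlgebra.exists_sum_four_nonneg x
  simp only [map_sum, star_sum, star_smul, map_smul]
  refine Finset.sum_congr rfl fun i _ => ?_
  rw [(IsSelfAdjoint.of_nonneg (hy i)).star_eq, (IsSelfAdjoint.of_nonneg (hpos _ (hy i))).star_eq]

theorem jordan_sa (E : A →ₗ[ℂ] A) (N : StarSubalgebra ℂ A) (hpos : ∀ x, 0 ≤ x → 0 ≤ E x)
    (hone : E 1 = 1) (hfix : ∀ x ∈ N, E x = x)
    {a y : A} (haN : a ∈ N) (ha : IsSelfAdjoint a) (hy : IsSelfAdjoint y) (hEy : E y = 0) :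
    E (a * y + y * a) = 0 := by
  have key : ∀ z : A, IsSelfAdjoint z → E z = 0 → 0 ≤ E (a * z + z * a) := by
    intro z hz hEz
    have hn : ∀ n : ℕ, 0 ≤ E (a * z + z * a) + (1 / ((n : ℝ) + 1)) • E (z * z) := by
      intro n
      set t : ℝ := 1 / ((n : ℝ) + 1) with ht
      have htpos : 0 < t := by positivity
      have hs : IsSelfAdjoint (a + t • z) := ha.add ((IsSelfAdjoint.all t).smul hz)
      have h1 := kadison E hpos hone hs
      have e1 : E (a + t • z) = a := by
        rw [map_add, LinearMap.map_smul_of_tower, hEz, hfix a haN]; simp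
      have e2 : (a + t • z) * (a + t • z) = a * a + t • (a * z + z * a) + (t * t) • (z * z) := by
        simp only [add_mul, mul_add, smul_mul_assoc, mul_smul_comm]
        module
      rw [e1, e2, map_add, map_add, LinearMap.map_smul_of_tower, LinearMap.map_smul_of_tower,
        hfix _ (mul_mem haN haN)] at h1
      have h2 := smul_nonneg (a := t⁻¹) (by positivity) h1
      convert h2 using 1
      match_scalars <;> field_simp
      ring
    have ht : Filter.Tendsto (fun n : ℕ => E (a * z + z * a) + (1 / ((n : ℝ) + 1)) • E (z * z))
        Filter.atTop (nhds (E (a * z + z * a) + (0 : ℝ) • E (z * z))) :=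
      tendsto_const_nhds.add (tendsto_one_div_add_atTop_nhds_zero_nat.smul_const _)
    have := ge_of_tendsto' ht hn
    simpa using this
  have h1 := key y hy hEy
  have h2 := key (-y) hy.neg (by simp [hEy])
  refine le_antisymm ?_ h1
  have : a * -y + -y * a = -(a * y + y * a) := by noncomm_ring
  rw [this, map_neg] at h2
  exact neg_nonneg.1 h2

theorem jordan0 (E : A →ₗ[ℂ] A) (N : StarSubalgebra ℂ A) (hpos : ∀ x, 0 ≤ x → 0 ≤ E x)
    (hone : E 1 = 1) (hfix : ∀ x ∈ N, E x = x)
    {a y : A} (haN : a ∈ N) (hEy : E y = 0) :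
    E (a * y + y * a) = 0 := by
  have hd : ∀ x : A, x = (1 / 2 : ℂ) • (x + star x)
      + (-Complex.I / 2) • (Complex.I • (x - star x)) := by
    intro x
    rw [smul_smul]
    have : -Complex.I / 2 * Complex.I = 1 / 2 := by
      rw [div_mul_eq_mul_div, neg_mul, Complex.I_mul_I, neg_neg]
    rw [this]
    module
  have s1 : ∀ x : A, IsSelfAdjoint (x + star x) := fun x => IsSelfAdjoint.add_star_self x
  have s2 : ∀ x : A, IsSelfAdjoint (Complex.I • (x - star x)) := fun x => by
    rw [IsSelfAdjoint, star_smul, star_sub, star_star]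
    simp only [RCLike.star_def, Complex.conj_I]
    module
  have hsy : E (star y) = 0 := by rw [pos_star E hpos, hEy, star_zero]
  have hsa : star a ∈ N := star_mem haN
  have a1 : a + star a ∈ N := add_mem haN hsa
  have a2 : Complex.I • (a - star a) ∈ N := N.smul_mem (sub_mem haN hsa) _
  have y1 : E (y + star y) = 0 := by simp [hEy, hsy]
  have y2 : E (Complex.I • (y - star y)) = 0 := by simp [hEy, hsy]
  have step : ∀ b ∈ N, IsSelfAdjoint b → E (b * y + y * b) = 0 := by
    intro b hb hbs
    have i1 := jordan_sa E N hpos hone hfix hb hbs (s1 y) y1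
    have i2 := jordan_sa E N hpos hone hfix hb hbs (s2 y) y2
    have : b * y + y * b = (1 / 2 : ℂ) • (b * (y + star y) + (y + star y) * b)
      + (-Complex.I / 2) • (b * (Complex.I • (y - star y)) + (Complex.I • (y - star y)) * b) := by
      conv_lhs => rw [hd y]
      simp only [mul_add, add_mul, mul_smul_comm, smul_mul_assoc]
      module
    rw [this, map_add, map_smul, map_smul, i1, i2]; simp
  have i1 := step _ a1 (s1 a)
  have i2 := step _ a2 (s2 a)
  have : a * y + y * a = (1 / 2 : ℂ) • ((a + star a) * y + y * (a + star a))
      + (-Complex.I / 2) • ((Complex.I • (a - star a)) * y + y * (Complex.I • (a - star a))) := by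
    conv_lhs => rw [hd a]
    simp only [mul_add, add_mul, mul_smul_comm, smul_mul_assoc]
    module
  rw [this, map_add, map_smul, map_smul, i1, i2]; simp

theorem jordan (E : A →ₗ[ℂ] A) (N : StarSubalgebra ℂ A) (hpos : ∀ x, 0 ≤ x → 0 ≤ E x)
    (hone : E 1 = 1) (hmem : ∀ x, E x ∈ N) (hfix : ∀ x ∈ N, E x = x)
    {a : A} (haN : a ∈ N) (y : A) :
    E (a * y + y * a) = a * E y + E y * a := by
  have h0 : E (y - E y) = 0 := by rw [map_sub, hfix _ (hmem y), sub_self]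
  have := jordan0 E N hpos hone hfix haN h0
  have e : a * (y - E y) + (y - E y) * a = (a * y + y * a) - (a * E y + E y * a) := by noncomm_ring
  rw [e, map_sub, hfix _ (add_mem (mul_mem haN (hmem y)) (mul_mem (hmem y) haN))] at this
  exact sub_eq_zero.1 this


theorem tomiyama_sa (E : A →ₗ[ℂ] A) (N : StarSubalgebra ℂ A) (hpos : ∀ x, 0 ≤ x → 0 ≤ E x)
    (hone : E 1 = 1) (hmem : ∀ x, E x ∈ N) (hfix : ∀ x ∈ N, E x = x)
    {a y : A} (haN : a ∈ N) (ha : IsSelfAdjoint a) (hy : IsSelfAdjoint y) (hEy : E y = 0) :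
    E (a * y) = 0 := by
  have hJ := fun {c : A} (hc : c ∈ N) (z : A) => jordan E N hpos hone hmem hfix hc z
  have hyc : ∀ c ∈ N, E (y * c) = - E (c * y) := by
    intro c hc
    have := hJ hc y
    rw [hEy, map_add] at this
    simp only [mul_zero, zero_mul, add_zero] at this
    exact eq_neg_of_add_eq_zero_right this
  have main : ∀ c ∈ N, ∀ b ∈ N, E (c * b * y) + E (c * b * y)
      = c * E (b * y) + E (b * y) * c + (b * E (c * y) + E (c * y) * b) := by
    intro c hc b hb
    have j1 := hJ hc (b * y)
    have j2 := hJ hb (y * c)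
    rw [map_add] at j1 j2
    have e1 : y * c * b = y * (c * b) := by noncomm_ring
    have e2 : b * (y * c) = b * y * c := by noncomm_ring
    have e3 : c * (b * y) = c * b * y := by noncomm_ring
    rw [e1, hyc _ (mul_mem hc hb), hyc c hc, e2] at j2
    rw [e3] at j1
    have e4 : E (c * b * y) + E (c * b * y)
      = (E (c * b * y) + E (b * y * c)) - (E (b * y * c) + - E (c * b * y)) := by abel
    rw [e4, j1, j2]
    noncomm_ring
  have half : ∀ u v : A, u + u = v + v → u = v := by
    intro u v h
    have h2 : (2 : ℂ) • u = (2 : ℂ) • v := by rw [two_smul, two_smul, h]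
    exact smul_right_injective A (two_ne_zero) h2
  have hcomm : ∀ c ∈ N, ∀ b ∈ N, E (c * b * y) = E (b * c * y) := by
    intro c hc b hb
    apply half
    rw [main c hc b hb, main b hb c hc]; abel
  set g := E (a * y) with hg
  have hgN : g ∈ N := hmem _
  have anti : ∀ b ∈ N, (a * b - b * a) * g + g * (a * b - b * a) = 0 := by
    intro b hb
    have m1 := main (a * b) (mul_mem haN hb) a haN
    have m2 := main a haN (b * a) (mul_mem hb haN)
    have e : a * (b * a) = a * b * a := by noncomm_ring
    rw [e, m1, ← hg, hcomm a haN b hb] at m2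
    have e2 : (a * b - b * a) * g + g * (a * b - b * a) =
      (a * b * g + g * (a * b) + (a * E (b * a * y) + E (b * a * y) * a)) -
       (a * E (b * a * y) + E (b * a * y) * a + (b * a * g + g * (b * a))) := by noncomm_ring
    rw [e2, m2, sub_self]
  have a1 := anti g hgN
  have a2 := anti (g * a) (mul_mem hgN haN)
  have hsq : (a * g - g * a) * (a * g - g * a) = 0 := by
    have : (a * g - g * a) * (a * g - g * a) =
      ((a * (g * a) - g * a * a) * g + g * (a * (g * a) - g * a * a))
        - ((a * g - g * a) * g + g * (a * g - g * a)) * a := by noncomm_ring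
    rw [this, a1, a2]; simp
  have hgs : star g = - g := by
    rw [hg, ← pos_star E hpos, star_mul, hy.star_eq, ha.star_eq, hyc a haN]
  have hag : a * g = g * a := by
    have hs : star (a * g - g * a) = a * g - g * a := by
      rw [star_sub, star_mul, star_mul, hgs, ha.star_eq]; noncomm_ring
    have : star (a * g - g * a) * (a * g - g * a) = 0 := by rw [hs, hsq]
    exact sub_eq_zero.1 ((CStarRing.star_mul_self_eq_zero_iff _).1 this)
  have hpow : ∀ n : ℕ, E (a ^ (n + 1) * y) = ((n : ℂ) + 1) • (a ^ n * g) := by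
    intro n
    induction n with
    | zero => simp [hg]
    | succ n ih =>
      apply half
      have hc : a ^ n * g * a = a ^ (n + 1) * g := by rw [mul_assoc, ← hag, ← mul_assoc, pow_succ]
      have hc2 : g * a ^ (n + 1) = a ^ (n + 1) * g :=
        ((show Commute a g from hag).pow_left (n + 1)).symm
      have hc3 : a * (a ^ n * g) = a ^ (n + 1) * g := by rw [← mul_assoc, ← pow_succ']
      rw [pow_succ, main _ (pow_mem haN _) a haN, ih, ← hg, hc2]
      simp only [mul_smul_comm, smul_mul_assoc, hc, hc3]
      push_cast
      module
  obtain ⟨C, hC⟩ := pos_cont E hpos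
  have hexp : ∀ s : ℂ, E (NormedSpace.exp (s • a) * y) = s • (NormedSpace.exp (s • a) * g) := by
    intro s
    have h1 := NormedSpace.exp_series_hasSum_exp' (𝕂 := ℂ) (s • a)
    let F : A →L[ℂ] A := LinearMap.mkContinuous E C hC
    have hF : ∀ x, F x = E x := fun x => rfl
    have h2 := (h1.mul_right y).mapL F
    have h3 := (h1.mul_right g).const_smul s
    have h4 := (hasSum_nat_add_iff' 1).2 h2
    simp only [hF] at h4
    have h5 : E (NormedSpace.exp (s • a) * y) - ∑ i ∈ Finset.range 1,
        E (((i.factorial : ℂ)⁻¹ • (s • a) ^ i) * y) = E (NormedSpace.exp (s • a) * y) := by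
      simp [hEy]
    rw [h5] at h4
    refine h4.unique ((funext fun n => ?_ : (fun n : ℕ => E ((((n + 1).factorial : ℂ)⁻¹ • (s • a) ^ (n + 1)) * y))
      = fun n : ℕ => s • (((n.factorial : ℂ)⁻¹ • (s • a) ^ n) * g)) ▸ h3)
    rw [smul_pow, smul_pow, smul_mul_assoc, smul_mul_assoc, smul_mul_assoc, smul_mul_assoc,
      map_smul, map_smul, hpow, Nat.factorial_succ, smul_smul, smul_smul, smul_smul, smul_smul]
    congr 1
    have h6 : ((n.factorial : ℕ) : ℂ) ≠ 0 := by exact_mod_cast n.factorial_ne_zero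
    have h7 : ((n : ℂ) + 1) ≠ 0 := by exact_mod_cast n.succ_ne_zero
    push_cast
    field_simp
    try ring
  have hb : ∀ t : ℝ, 0 < t → t * ‖g‖ ≤ C * ‖y‖ := by
    intro t ht
    let h : selfAdjoint A := ⟨t • a, (IsSelfAdjoint.all t).smul ha⟩
    let u : unitary A := selfAdjoint.expUnitary h
    have hu : (u : A) = NormedSpace.exp ((Complex.I * t) • a) := by
      rw [selfAdjoint.expUnitary_coe, mul_smul]
      rfl
    have h1 := hexp (Complex.I * t)
    rw [← hu] at h1
    have h2 : ‖E ((u : A) * y)‖ ≤ C * ‖y‖ := by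
      have := hC ((u : A) * y)
      rwa [CStarRing.norm_coe_unitary_mul] at this
    rw [h1, norm_smul, CStarRing.norm_coe_unitary_mul] at h2
    simpa [abs_of_pos ht] using h2
  by_contra hne
  have hgp : 0 < ‖g‖ := norm_pos_iff.2 hne
  have hC0 : 0 ≤ C * ‖y‖ := le_trans (by positivity) (hb 1 one_pos)
  have := hb ((C * ‖y‖ + 1) / ‖g‖) (by positivity)
  rw [div_mul_cancel₀ _ hgp.ne'] at this
  linarith

theorem tomiyama_left (E : A →ₗ[ℂ] A) (N : StarSubalgebra ℂ A) (hpos : ∀ x, 0 ≤ x → 0 ≤ E x)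
    (hone : E 1 = 1) (hmem : ∀ x, E x ∈ N) (hfix : ∀ x ∈ N, E x = x)
    {a : A} (haN : a ∈ N) (y : A) : E (a * y) = a * E y := by
  have hd : ∀ x : A, x = (1 / 2 : ℂ) • (x + star x)
      + (-Complex.I / 2) • (Complex.I • (x - star x)) := by
    intro x
    rw [smul_smul]
    have : -Complex.I / 2 * Complex.I = 1 / 2 := by
      rw [div_mul_eq_mul_div, neg_mul, Complex.I_mul_I, neg_neg]
    rw [this]
    module
  have s1 : ∀ x : A, IsSelfAdjoint (x + star x) := fun x => IsSelfAdjoint.add_star_self x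
  have s2 : ∀ x : A, IsSelfAdjoint (Complex.I • (x - star x)) := fun x => by
    rw [IsSelfAdjoint, star_smul, star_sub, star_star]
    simp only [RCLike.star_def, Complex.conj_I]
    module
  have hsa : star a ∈ N := star_mem haN
  have a1 : a + star a ∈ N := add_mem haN hsa
  have a2 : Complex.I • (a - star a) ∈ N := N.smul_mem (sub_mem haN hsa) _
  have zero : ∀ z : A, E z = 0 → E (a * z) = 0 := by
    intro z hz
    have hsz : E (star z) = 0 := by rw [pos_star E hpos, hz, star_zero]
    have z1 : E (z + star z) = 0 := by simp [hz, hsz]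
    have z2 : E (Complex.I • (z - star z)) = 0 := by simp [hz, hsz]
    have step : ∀ b ∈ N, IsSelfAdjoint b → E (b * z) = 0 := by
      intro b hb hbs
      have i1 := tomiyama_sa E N hpos hone hmem hfix hb hbs (s1 z) z1
      have i2 := tomiyama_sa E N hpos hone hmem hfix hb hbs (s2 z) z2
      rw [hd z, mul_add, mul_smul_comm, mul_smul_comm, map_add, map_smul, map_smul, i1, i2]
      simp
    rw [hd a, add_mul, smul_mul_assoc, smul_mul_assoc, map_add, map_smul, map_smul,
      step _ a1 (s1 a), step _ a2 (s2 a)]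
    simp
  have h0 : E (y - E y) = 0 := by rw [map_sub, hfix _ (hmem y), sub_self]
  have := zero _ h0
  rw [mul_sub, map_sub, hfix _ (mul_mem haN (hmem y))] at this
  exact sub_eq_zero.1 this

theorem tomiyama_conj (E : A →ₗ[ℂ] A) (N : StarSubalgebra ℂ A) (hpos : ∀ x, 0 ≤ x → 0 ≤ E x)
    (hone : E 1 = 1) (hmem : ∀ x, E x ∈ N) (hfix : ∀ x ∈ N, E x = x)
    {a : A} (haN : a ∈ N) (y : A) : E (star a * y * a) = star a * E y * a := by
  have hL := fun {c : A} (hc : c ∈ N) (z : A) => tomiyama_left E N hpos hone hmem hfix hc z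
  have hR : E (y * a) = E y * a := by
    have := hL (star_mem haN) (star y)
    rw [← star_mul, pos_star E hpos, pos_star E hpos, ← star_mul] at this
    exact star_injective this
  rw [mul_assoc, hL (star_mem haN), hR, mul_assoc]

end Tomiyama

section Tensor
variable {H H2}
open ContinuousLinearMap InnerProductSpace

theorem norm_tmul (Q : LCQG H H2) (a b : H) : ‖Q.tmul a b‖ = ‖a‖ * ‖b‖ := by
  have h := Q.tmul_inner a b a b
  rw [inner_self_eq_norm_sq_to_K, inner_self_eq_norm_sq_to_K, inner_self_eq_norm_sq_to_K] at h
  have h2 : ‖Q.tmul a b‖ ^ 2 = (‖a‖ * ‖b‖) ^ 2 := by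
    rw [mul_pow]; exact_mod_cast h
  exact (pow_left_inj₀ (norm_nonneg _) (by positivity) two_ne_zero).1 h2

theorem dense_tmul (Q : LCQG H H2) :
    Dense (Submodule.span ℂ {v : H2 | ∃ a b, v = Q.tmul a b} : Set H2) :=
  Submodule.dense_iff_topologicalClosure_eq_top.2 Q.tmul_total

/-- `ζ ↦ e ⊗ ζ`. -/
def Lop (Q : LCQG H H2) (e : H) : H →L[ℂ] H2 :=
  LinearMap.mkContinuous (Q.tmul e) ‖e‖ fun x => (norm_tmul Q e x).le

/-- `ζ ↦ ζ ⊗ d`. -/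
def Rop (Q : LCQG H H2) (d : H) : H →L[ℂ] H2 :=
  LinearMap.mkContinuous (Q.tmul.flip d) ‖d‖ fun x => by
    rw [mul_comm]; exact (norm_tmul Q x d).le

theorem Lop_apply (Q : LCQG H H2) (e x : H) : Lop Q e x = Q.tmul e x := rfl
theorem Rop_apply (Q : LCQG H H2) (d x : H) : Rop Q d x = Q.tmul x d := rfl

theorem Lop_adj_inner (Q : LCQG H H2) (e x : H) (v : H2) :
    ⟪x, adjoint (Lop Q e) v⟫ = ⟪Q.tmul e x, v⟫ := by
  rw [adjoint_inner_right, Lop_apply]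

theorem Lop_adj_tmul (Q : LCQG H H2) (e c d : H) :
    adjoint (Lop Q e) (Q.tmul c d) = ⟪e, c⟫ • d := by
  refine ext_inner_left ℂ fun x => ?_
  rw [Lop_adj_inner, Q.tmul_inner, inner_smul_right]

theorem tensorOp_one_one (Q : LCQG H H2) : Q.tensorOp 1 1 = 1 := by
  refine ContinuousLinearMap.ext_on (dense_tmul Q) ?_
  rintro v ⟨a, b, rfl⟩
  rw [Q.tensorOp_apply]; rfl

theorem tensorOp_one_Lop (Q : LCQG H H2) (e : H) (x : B H) (v : H2) :
    adjoint (Lop Q e) (Q.tensorOp 1 x v) = x (adjoint (Lop Q e) v) := by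
  have : (adjoint (Lop Q e)).comp (Q.tensorOp 1 x) = x.comp (adjoint (Lop Q e)) := by
    refine ContinuousLinearMap.ext_on (dense_tmul Q) ?_
    rintro v ⟨a, b, rfl⟩
    simp [Q.tensorOp_apply, Lop_adj_tmul]
  exact congrArg (fun T => T v) this

theorem tmul_orthonormal (Q : LCQG H H2) {ι : Type*} (b : HilbertBasis ι ℂ H) :
    Orthonormal ℂ (fun p : ι × ι => Q.tmul (b p.1) (b p.2)) := by
  classical
  rw [orthonormal_iff_ite]
  rintro ⟨i, j⟩ ⟨k, l⟩
  have h := orthonormal_iff_ite.1 b.orthonormal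
  rw [Q.tmul_inner, h, h]
  by_cases h1 : i = k <;> by_cases h2 : j = l <;> simp [h1, h2]

theorem basis_eq_zero {ι : Type*} (b : HilbertBasis ι ℂ H) {x : H} (h : ∀ i, ⟪b i, x⟫ = 0) :
    x = 0 := by
  have := b.hasSum_inner_mul_inner x x
  simp only [h, mul_zero] at this
  exact inner_self_eq_zero.1 (this.unique hasSum_zero)

theorem tmul_orth (Q : LCQG H H2) {ι : Type*} (b : HilbertBasis ι ℂ H) :
    (Submodule.span ℂ (Set.range (fun p : ι × ι => Q.tmul (b p.1) (b p.2))))ᗮ = ⊥ := by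
  rw [eq_bot_iff]
  intro v hv
  rw [Submodule.mem_orthogonal] at hv
  have h0 : ∀ i j, ⟪Q.tmul (b i) (b j), v⟫ = 0 := fun i j =>
    hv _ (Submodule.subset_span ⟨(i, j), rfl⟩)
  have h1 : ∀ i d, ⟪Q.tmul (b i) d, v⟫ = 0 := by
    intro i d
    have : adjoint (Lop Q (b i)) v = 0 :=
      basis_eq_zero b fun j => by rw [Lop_adj_inner, h0]
    rw [← Lop_adj_inner, this, inner_zero_right]
  have h2 : ∀ c d, ⟪Q.tmul c d, v⟫ = 0 := by
    intro c d
    have : adjoint (Rop Q d) v = 0 :=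
      basis_eq_zero b fun j => by rw [adjoint_inner_right, Rop_apply, h1]
    have h3 : ⟪c, adjoint (Rop Q d) v⟫ = ⟪Q.tmul c d, v⟫ := by rw [adjoint_inner_right, Rop_apply]
    rw [← h3, this, inner_zero_right]
  have h3 : innerSL ℂ v = 0 := by
    refine ContinuousLinearMap.ext_on (dense_tmul Q) ?_
    rintro w ⟨a, b, rfl⟩
    rw [innerSL_apply_apply, ← inner_conj_symm, h2]; simp
  have h4 : ⟪v, v⟫ = 0 := by rw [← innerSL_apply_apply, h3]; rfl
  simpa using h4

/-- Product Hilbert basis. -/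
def prodBasis (Q : LCQG H H2) {ι : Type*} (b : HilbertBasis ι ℂ H) : HilbertBasis (ι × ι) ℂ H2 :=
  HilbertBasis.mkOfOrthogonalEqBot (tmul_orthonormal Q b) (tmul_orth Q b)

theorem prodBasis_apply (Q : LCQG H H2) {ι : Type*} (b : HilbertBasis ι ℂ H) (p : ι × ι) :
    prodBasis Q b p = Q.tmul (b p.1) (b p.2) := by
  simp [prodBasis]

theorem parseval (Q : LCQG H H2) {ι : Type*} (b : HilbertBasis ι ℂ H) (v w : H2) :
    HasSum (fun i => ⟪adjoint (Lop Q (b i)) v, adjoint (Lop Q (b i)) w⟫) ⟪v, w⟫ := by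
  refine ((prodBasis Q b).hasSum_inner_mul_inner v w).prod_fiberwise fun i => ?_
  have := b.hasSum_inner_mul_inner (adjoint (Lop Q (b i)) v) (adjoint (Lop Q (b i)) w)
  convert this using 2 with j
  rw [prodBasis_apply, adjoint_inner_left, Lop_adj_inner, Lop_apply]

theorem summable_mul_aux {K : Type*} [NormedAddCommGroup K] {ξ η : ℕ → K}
    (hξ : Summable (fun n => ‖ξ n‖ ^ 2)) (hη : Summable (fun n => ‖η n‖ ^ 2)) :
    Summable (fun n => ‖η n‖ * ‖ξ n‖) := by
  refine Summable.of_nonneg_of_le (fun n => by positivity) (fun n => ?_) (hξ.add hη)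
  nlinarith [sq_nonneg (‖ξ n‖ - ‖η n‖), sq_nonneg (‖ξ n‖ + ‖η n‖)]

theorem inner_bound {K : Type*} [NormedAddCommGroup K] [InnerProductSpace ℂ K]
    (ξ η : K) (x : B K) : ‖⟪η, x ξ⟫‖ ≤ (‖η‖ * ‖ξ‖) * ‖x‖ := by
  refine (norm_inner_le_norm _ _).trans ?_
  rw [mul_assoc]
  gcongr
  rw [mul_comm]
  exact x.le_opNorm ξ

theorem normal_bound {K : Type*} [NormedAddCommGroup K] [InnerProductSpace ℂ K] [CompleteSpace K]
    {φ : B K →ₗ[ℂ] ℂ} (h : IsNormalFunctional K φ) : ∃ C : ℝ, ∀ x, ‖φ x‖ ≤ C * ‖x‖ := by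
  obtain ⟨ξ, η, hξ, hη, hs⟩ := h
  refine ⟨∑' n, ‖η n‖ * ‖ξ n‖, fun x => ?_⟩
  rw [← (hs x).tsum_eq]
  have h1 := (summable_mul_aux hξ hη).hasSum.mul_right ‖x‖
  exact tsum_of_norm_bounded h1 fun n => inner_bound _ _ _

theorem normal_expand {K : Type*} [NormedAddCommGroup K] [InnerProductSpace ℂ K] [CompleteSpace K]
    {φ : B K →ₗ[ℂ] ℂ} (h : IsNormalFunctional K φ) {ι : Type*} (c : HilbertBasis ι ℂ K) (X : B K) :
    HasSum (fun i => φ (rankOne ℂ (c i) (adjoint X (c i)))) (φ X) := by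
  obtain ⟨ξ, η, hξ, hη, hs⟩ := h
  have hsq : ∀ v : K, HasSum (fun i => ‖⟪v, c i⟫‖ ^ 2) (‖v‖ ^ 2) := by
    intro v
    have := c.hasSum_inner_mul_inner v v
    have h2 := Complex.hasSum_re this
    convert h2 using 1
    · ext i
      rw [← inner_conj_symm (c i) v, Complex.mul_conj, Complex.normSq_eq_norm_sq]
      norm_cast
    · rw [inner_self_eq_norm_sq_to_K]; norm_cast
  have hprod : ∀ v : ℕ → K, Summable (fun n => ‖v n‖ ^ 2) →
      Summable (fun p : ℕ × ι => ‖⟪v p.1, c p.2⟫‖ ^ 2) := by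
    intro v hv
    rw [summable_prod_of_nonneg (fun p => by positivity)]
    refine ⟨fun n => (hsq (v n)).summable, ?_⟩
    simpa only [(hsq _).tsum_eq] using hv
  have hX : Summable (fun n => ‖X (ξ n)‖ ^ 2) := by
    refine Summable.of_nonneg_of_le (fun n => by positivity) (fun n => ?_) (hξ.mul_left (‖X‖ ^ 2))
    rw [← mul_pow]
    gcongr
    exact X.le_opNorm _
  have hsum : Summable (fun p : ℕ × ι => ⟪η p.1, c p.2⟫ * ⟪c p.2, X (ξ p.1)⟫) := by
    refine Summable.of_norm_bounded ((hprod η hη).add (hprod _ hX)) fun p => ?_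
    rw [norm_mul, norm_inner_symm (c p.2)]
    nlinarith [sq_nonneg (‖⟪η p.1, c p.2⟫‖ - ‖⟪X (ξ p.1), c p.2⟫‖),
      sq_nonneg (‖⟪η p.1, c p.2⟫‖), sq_nonneg (‖⟪X (ξ p.1), c p.2⟫‖)]
  obtain ⟨S, hS⟩ := hsum
  have h1 := hS.prod_fiberwise fun n => c.hasSum_inner_mul_inner (η n) (X (ξ n))
  have hSe : S = φ X := h1.unique (hs X)
  rw [← hSe]
  have h2 := (Equiv.hasSum_iff (Equiv.prodComm ι ℕ)).2 hS
  refine h2.prod_fiberwise fun i => ?_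
  convert hs (rankOne ℂ (c i) (adjoint X (c i))) using 2 with n
  simp [rankOne_apply, inner_smul_right, adjoint_inner_left, mul_comm]

theorem rankOne_tmul (Q : LCQG H H2) (a b c d : H) :
    rankOne ℂ (Q.tmul a b) (Q.tmul c d) = Q.tensorOp (rankOne ℂ a c) (rankOne ℂ b d) := by
  refine ContinuousLinearMap.ext_on (dense_tmul Q) ?_
  rintro w ⟨x, y, rfl⟩
  simp [Q.tensorOp_apply, Q.tmul_inner, smul_smul, mul_comm]

theorem normal_unique (Q : LCQG H H2) {φ ψ : B H2 →ₗ[ℂ] ℂ} (hφ : IsNormalFunctional H2 φ)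
    (hψ : IsNormalFunctional H2 ψ)
    (h : ∀ x y, φ (Q.tensorOp x y) = ψ (Q.tensorOp x y)) (X : B H2) : φ X = ψ X := by
  obtain ⟨C, hC⟩ := normal_bound hφ
  obtain ⟨D, hD⟩ := normal_bound hψ
  let f : B H2 →L[ℂ] ℂ := φ.mkContinuous C hC
  let g : B H2 →L[ℂ] ℂ := ψ.mkContinuous D hD
  have h1 : ∀ a b, ∀ v, f (rankOne ℂ (Q.tmul a b) v) = g (rankOne ℂ (Q.tmul a b) v) := by
    intro a b v
    have : f.comp (rankOne ℂ (Q.tmul a b)) = g.comp (rankOne ℂ (Q.tmul a b)) := by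
      refine ContinuousLinearMap.ext_on (dense_tmul Q) ?_
      rintro w ⟨x, y, rfl⟩
      change f (rankOne ℂ _ _) = g (rankOne ℂ _ _)
      rw [rankOne_tmul]
      exact h _ _
    exact congrArg (fun T => T v) this
  have h2 : ∀ u v : H2, f (rankOne ℂ u v) = g (rankOne ℂ u v) := by
    intro u v
    have : f.comp ((rankOne ℂ).flip v) = g.comp ((rankOne ℂ).flip v) := by
      refine ContinuousLinearMap.ext_on (dense_tmul Q) ?_
      rintro w ⟨x, y, rfl⟩
      exact h1 _ _ _
    exact congrArg (fun T => T u) this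
  obtain ⟨w, c, -⟩ := exists_hilbertBasis ℂ H2
  refine (normal_expand hφ c X).unique ?_
  have h3 := normal_expand hψ c X
  have h4 : (fun i => φ (rankOne ℂ (c i) (adjoint X (c i))))
    = fun i => ψ (rankOne ℂ (c i) (adjoint X (c i))) := funext fun i => h2 _ _
  rw [h4]
  exact h3

/-- The functional `x ↦ ∑ ⟪ηₙ, x ξₙ⟫`. -/
def normalF {K : Type*} [NormedAddCommGroup K] [InnerProductSpace ℂ K]
    (ξ η : ℕ → K) (hs : Summable (fun n => ‖η n‖ * ‖ξ n‖)) : B K →ₗ[ℂ] ℂ where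
  toFun x := ∑' n, ⟪η n, x (ξ n)⟫
  map_add' x y := by
    have hh : ∀ x : B K, Summable (fun n => ⟪η n, x (ξ n)⟫) := fun x =>
      Summable.of_norm_bounded (hs.mul_right ‖x‖) fun n => inner_bound _ _ _
    rw [← (hh x).tsum_add (hh y)]
    simp [inner_add_right]
  map_smul' c x := by
    simp [inner_smul_right, tsum_mul_left]

theorem normalF_hasSum {K : Type*} [NormedAddCommGroup K] [InnerProductSpace ℂ K]
    (ξ η : ℕ → K) (hs : Summable (fun n => ‖η n‖ * ‖ξ n‖)) (x : B K) :
    HasSum (fun n => ⟪η n, x (ξ n)⟫) (normalF ξ η hs x) :=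
  (Summable.of_norm_bounded (hs.mul_right ‖x‖) fun n => inner_bound _ _ _).hasSum

theorem vec_normal (ζ θ : H) : IsNormalFunctional H (vecFunctional H ζ θ) := by
  refine ⟨fun n => if n = 0 then ζ else 0, fun n => if n = 0 then θ else 0, ?_, ?_, fun x => ?_⟩
  · exact summable_of_ne_finset_zero (s := {0}) fun n hn => by simp at hn; simp [hn]
  · exact summable_of_ne_finset_zero (s := {0}) fun n hn => by simp at hn; simp [hn]
  · have := hasSum_single (f := fun n : ℕ => ⟪(if n = 0 then θ else 0 : H),
      x (if n = 0 then ζ else 0)⟫) 0 (fun n hn => by simp [hn])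
    simpa [vecFunctional] using this

theorem slice_hasSum (Q : LCQG H H2) {ω : B H →ₗ[ℂ] ℂ} {ξ η : ℕ → H}
    (hξ : Summable (fun n => ‖ξ n‖ ^ 2)) (hη : Summable (fun n => ‖η n‖ ^ 2))
    (hs : ∀ x : B H, HasSum (fun n => ⟪η n, x (ξ n)⟫) (ω x)) (X : B H2) (ζ θ : H) :
    HasSum (fun n => ⟪Q.tmul (η n) θ, X (Q.tmul (ξ n) ζ)⟫) ⟪θ, Q.sliceL ω X ζ⟫ := by
  have h1 : Summable (fun n => ‖Q.tmul (ξ n) ζ‖ ^ 2) := by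
    simp only [norm_tmul, mul_pow]; exact hξ.mul_right _
  have h2 : Summable (fun n => ‖Q.tmul (η n) θ‖ ^ 2) := by
    simp only [norm_tmul, mul_pow]; exact hη.mul_right _
  have h3 := normalF_hasSum _ _ (summable_mul_aux h1 h2)
  have h4 := Q.sliceL_char ω X ζ θ
  change ⟪θ, Q.sliceL ω X ζ⟫ = _ at h4
  rw [h4]
  have h5 := normal_unique Q (Q.funcTensor_normal _ _ ⟨ξ, η, hξ, hη, hs⟩ (vec_normal ζ θ))
    ⟨_, _, h1, h2, h3⟩ (fun x y => ?_) X
  · rw [h5]; exact h3 X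
  · rw [Q.funcTensor_elem]
    refine HasSum.unique ?_ (h3 _)
    simp only [Q.tensorOp_apply, Q.tmul_inner]
    exact (hs x).mul_right _

end Tensor

section Mean
variable {H H2}
open ContinuousLinearMap InnerProductSpace

theorem hasSum_transport {f g : ℕ → ℂ} {a b : ℂ} (h : HasSum g b) (hf : ∀ n, f n = g n)
    (hab : a = b) : HasSum f a := by
  rw [hab, funext hf]
  exact h

theorem nonneg_of_inner {T : B H} (h : ∀ ζ, 0 ≤ ⟪ζ, T ζ⟫) : 0 ≤ T := by
  rw [ContinuousLinearMap.nonneg_iff_isPositive, ContinuousLinearMap.isPositive_iff_complex]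
  intro ζ
  have h1 := Complex.nonneg_iff.1 (h ζ)
  have h2 : ⟪T ζ, ζ⟫ = ⟪ζ, T ζ⟫ := by
    rw [← inner_conj_symm]
    exact Complex.conj_eq_iff_im.2 h1.2.symm
  rw [h2]
  exact ⟨Complex.ext (by simp) (by simpa using h1.2), by simpa using h1.1⟩

theorem inner_of_nonneg {T : B H} (h : 0 ≤ T) (ζ : H) : 0 ≤ ⟪ζ, T ζ⟫ := by
  rw [ContinuousLinearMap.nonneg_iff_isPositive] at h
  exact h.inner_nonneg_right ζ

/-- The coefficient `(ω_{ξ,e} ⊗ id)(W)`. -/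
def aop (Q : LCQG H H2) (e ξ : H) : B H := (adjoint (Lop Q e)).comp (Q.W.comp (Lop Q ξ))

theorem W_comm (Q : LCQG H H2) {c : B H} (hc : c ∈ Q.Mhat.commutant) (ξ ζ : H) :
    Q.W (Q.tmul ξ (c ζ)) = Q.tensorOp 1 c (Q.W (Q.tmul ξ ζ)) := by
  have h := Q.W_mem 1 (one_mem _) c hc
  have h2 := congrArg (fun T : B H2 => T (Q.tmul ξ ζ)) h.eq
  simpa [Q.tensorOp_apply] using h2

theorem aop_mem (Q : LCQG H H2) (e ξ : H) : aop Q e ξ ∈ Q.Mhat := by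
  rw [← Q.Mhat.commutant_commutant, VonNeumannAlgebra.mem_commutant_iff]
  intro c hc
  ext ζ
  change c (adjoint (Lop Q e) (Q.W (Q.tmul ξ ζ))) = adjoint (Lop Q e) (Q.W (Q.tmul ξ (c ζ)))
  rw [W_comm Q hc, tensorOp_one_Lop]

theorem W_inner (Q : LCQG H H2) (v w : H2) : ⟪Q.W v, Q.W w⟫ = ⟪v, w⟫ := by
  rw [← adjoint_inner_right, ← ContinuousLinearMap.star_eq_adjoint]
  have := congrArg (fun T : B H2 => T w) Q.W_unitary_l
  simp only [ContinuousLinearMap.mul_apply, ContinuousLinearMap.one_apply] at this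
  rw [this]

theorem Delta_inner (Q : LCQG H H2) (x : B H) (v w : H2) :
    ⟪v, Q.Delta x w⟫ = ⟪Q.W v, Q.tensorOp 1 x (Q.W w)⟫ := by
  rw [← adjoint_inner_right, ← ContinuousLinearMap.star_eq_adjoint]
  rfl

theorem Delta_hasSum (Q : LCQG H H2) {ι : Type*} (b : HilbertBasis ι ℂ H) (x : B H) (ξ ζ : H) :
    HasSum (fun i => ⟪aop Q (b i) ξ ζ, x (aop Q (b i) ξ ζ)⟫)
      ⟪Q.tmul ξ ζ, Q.Delta x (Q.tmul ξ ζ)⟫ := by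
  rw [Delta_inner]
  have := parseval Q b (Q.W (Q.tmul ξ ζ)) (Q.tensorOp 1 x (Q.W (Q.tmul ξ ζ)))
  simp only [tensorOp_one_Lop] at this
  exact this

theorem lower_pos (Q : LCQG H H2)
    (E : B H →ₗ[ℂ] B H) (hE : IsConditionalExpectation H Q.Mhat E)
    (hEcen : ∀ x ∈ Q.M, E x ∈ center H Q.Mhat) {x : B H} (hx : x ∈ Q.M) (hx0 : 0 ≤ x)
    {ξ : ℕ → H} {s : ℂ} (hs : HasSum (fun n => ⟪ξ n, ξ n⟫) s) {T : B H}
    (hT : ∀ ζ, HasSum (fun n => ⟪Q.tmul (ξ n) ζ, Q.Delta x (Q.tmul (ξ n) ζ)⟫) ⟪ζ, T ζ⟫) :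
    0 ≤ E T - s • E x := by
  obtain ⟨w, b, -⟩ := exists_hilbertBasis ℂ H
  have hpos : ∀ x : B H, 0 ≤ x → 0 ≤ E x := fun x h => by
    rw [ContinuousLinearMap.nonneg_iff_isPositive] at h ⊢
    exact hE.positive x h
  obtain ⟨hcN, hcc⟩ := hEcen x hx
  have hc' : E x ∈ Q.Mhat.commutant := by
    rw [VonNeumannAlgebra.mem_commutant_iff]
    exact fun g hg => (hcc g hg).symm
  have hconj : ∀ a ∈ Q.Mhat, E (star a * x * a) = star a * E x * a := fun a ha =>
    tomiyama_conj E Q.Mhat.toStarSubalgebra hpos hE.unital hE.mem_range hE.fixes ha x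
  have hterm : ∀ n ζ i, 0 ≤ ⟪aop Q (b i) (ξ n) ζ, x (aop Q (b i) (ξ n) ζ)⟫ := fun n ζ i =>
    inner_of_nonneg hx0 _
  have hstar : ∀ (a y : B H) (ζ : H), ⟪ζ, (star a * y * a) ζ⟫ = ⟪a ζ, y (a ζ)⟫ := by
    intro a y ζ
    rw [ContinuousLinearMap.star_eq_adjoint]
    exact adjoint_inner_right a ζ (y (a ζ))
  have h1 : ∀ (F : Finset ℕ) (G : Finset w), 0 ≤
      T - ∑ i ∈ G, ∑ n ∈ F, star (aop Q (b i) (ξ n)) * x * aop Q (b i) (ξ n) := by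
    intro F G
    refine nonneg_of_inner fun ζ => ?_
    rw [ContinuousLinearMap.sub_apply, inner_sub_right, sub_nonneg]
    simp only [ContinuousLinearMap.sum_apply, inner_sum, hstar]
    rw [Finset.sum_comm]
    refine le_trans (Finset.sum_le_sum fun n _ => sum_le_hasSum G (fun i _ => hterm n ζ i)
      (Delta_hasSum Q b x (ξ n) ζ)) ?_
    exact sum_le_hasSum F (fun n _ => (Delta_hasSum Q b x (ξ n) ζ).nonneg (hterm n ζ)) (hT ζ)
  have h2 : ∀ (F : Finset ℕ) (G : Finset w) (ζ : H),
      ∑ i ∈ G, ∑ n ∈ F, ⟪aop Q (b i) (ξ n) ζ, aop Q (b i) (ξ n) (E x ζ)⟫ ≤ ⟪ζ, E T ζ⟫ := by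
    intro F G ζ
    have h3 := inner_of_nonneg (hpos _ (h1 F G)) ζ
    rw [map_sub, ContinuousLinearMap.sub_apply, inner_sub_right, sub_nonneg] at h3
    simp only [map_sum, hconj _ (aop_mem Q _ _), ContinuousLinearMap.sum_apply, inner_sum,
      hstar] at h3
    have hco : ∀ i n, aop Q (b i) (ξ n) (E x ζ) = E x (aop Q (b i) (ξ n) ζ) := fun i n =>
      (congrArg (fun T : B H => T ζ) (hcc _ (aop_mem Q (b i) (ξ n)))).symm
    simp only [hco]
    exact h3
  refine nonneg_of_inner fun ζ => ?_
  rw [ContinuousLinearMap.sub_apply, inner_sub_right, sub_nonneg, ContinuousLinearMap.smul_apply,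
    inner_smul_right]
  refine hasSum_le_of_sum_le (hs.mul_right _) fun F => ?_
  have h4 : ∀ n ∈ F, HasSum (fun i => ⟪aop Q (b i) (ξ n) ζ, aop Q (b i) (ξ n) (E x ζ)⟫)
      (⟪ξ n, ξ n⟫ * ⟪ζ, E x ζ⟫) := by
    intro n _
    have := parseval Q b (Q.W (Q.tmul (ξ n) ζ)) (Q.W (Q.tmul (ξ n) (E x ζ)))
    rw [W_inner, Q.tmul_inner] at this
    exact this
  exact hasSum_le_of_sum_le (hasSum_sum h4) fun G => h2 F G ζ

theorem Delta_add (Q : LCQG H H2) (x y : B H) : Q.Delta (x + y) = Q.Delta x + Q.Delta y := by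
  simp [LCQG.Delta, mul_add, add_mul]

theorem Delta_smul (Q : LCQG H H2) (c : ℂ) (x : B H) : Q.Delta (c • x) = c • Q.Delta x := by
  simp [LCQG.Delta, mul_smul_comm, smul_mul_assoc]

theorem Delta_one (Q : LCQG H H2) : Q.Delta 1 = 1 := by
  simp [LCQG.Delta, tensorOp_one_one, Q.W_unitary_l]

theorem smul_mem_vna (N : VonNeumannAlgebra H) (c : ℂ) {x : B H} (hx : x ∈ N) : c • x ∈ N :=
  N.toStarSubalgebra.smul_mem hx c

theorem lower_sa (Q : LCQG H H2)
    (E : B H →ₗ[ℂ] B H) (hE : IsConditionalExpectation H Q.Mhat E)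
    (hEcen : ∀ x ∈ Q.M, E x ∈ center H Q.Mhat) {x : B H} (hx : x ∈ Q.M) (hx0 : IsSelfAdjoint x)
    {ξ : ℕ → H} {s : ℂ} (hs : HasSum (fun n => ⟪ξ n, ξ n⟫) s) {T : B H}
    (hT : ∀ ζ, HasSum (fun n => ⟪Q.tmul (ξ n) ζ, Q.Delta x (Q.tmul (ξ n) ζ)⟫) ⟪ζ, T ζ⟫) :
    0 ≤ E T - s • E x := by
  have hp : 0 ≤ x + (‖x‖ : ℂ) • (1 : B H) := by
    have := IsSelfAdjoint.neg_algebraMap_norm_le_self hx0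
    rw [neg_le_iff_add_nonneg, Algebra.algebraMap_eq_smul_one] at this
    exact this
  have h1 := lower_pos Q E hE hEcen (x := x + (‖x‖ : ℂ) • (1 : B H))
    (add_mem hx (smul_mem_vna _ _ (one_mem _))) hp hs (T := T + ((‖x‖ : ℂ) * s) • (1 : B H))
    (fun ζ => by
      have h2 := (hT ζ).add ((hs.mul_left (‖x‖ : ℂ)).mul_right ⟪ζ, ζ⟫)
      refine hasSum_transport h2 (fun n => ?_) ?_
      · simp only [Delta_add, Delta_smul, Delta_one, _root_.add_apply, _root_.smul_apply,
          ContinuousLinearMap.one_apply, inner_add_right, inner_smul_right, Q.tmul_inner, mul_assoc]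
      · simp only [_root_.add_apply, _root_.smul_apply,
          ContinuousLinearMap.one_apply, inner_add_right, inner_smul_right])
  convert h1 using 1
  simp only [map_add, map_smul, hE.unital]
  module

theorem slice_sa (Q : LCQG H H2)
    (E : B H →ₗ[ℂ] B H) (hE : IsConditionalExpectation H Q.Mhat E)
    (hEcen : ∀ x ∈ Q.M, E x ∈ center H Q.Mhat) {x : B H} (hx : x ∈ Q.M) (hx0 : IsSelfAdjoint x)
    {ξ : ℕ → H} {s : ℂ} (hs : HasSum (fun n => ⟪ξ n, ξ n⟫) s) {T : B H}
    (hT : ∀ ζ, HasSum (fun n => ⟪Q.tmul (ξ n) ζ, Q.Delta x (Q.tmul (ξ n) ζ)⟫) ⟪ζ, T ζ⟫) :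
    E T = s • E x := by
  have h1 := lower_sa Q E hE hEcen hx hx0 hs hT
  have h2 := lower_sa Q E hE hEcen (neg_mem hx) hx0.neg hs (T := -T) (fun ζ => by
    have h3 : Q.Delta (-x) = - Q.Delta x := by
      have := Delta_smul Q (-1) x
      simpa using this
    refine hasSum_transport (hT ζ).neg (fun n => ?_) ?_
    · simp [h3]
    · simp)
  refine le_antisymm ?_ (sub_nonneg.1 h1)
  rw [map_neg, map_neg, smul_neg, sub_neg_eq_add, neg_add_eq_sub] at h2
  exact sub_nonneg.1 h2

theorem slice_diag (Q : LCQG H H2)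
    (E : B H →ₗ[ℂ] B H) (hE : IsConditionalExpectation H Q.Mhat E)
    (hEcen : ∀ x ∈ Q.M, E x ∈ center H Q.Mhat) {x : B H} (hx : x ∈ Q.M)
    {ξ : ℕ → H} (hξ : Summable (fun n => ‖ξ n‖ ^ 2)) {ω : B H →ₗ[ℂ] ℂ}
    (hω : ∀ x : B H, HasSum (fun n => ⟪ξ n, x (ξ n)⟫) (ω x)) :
    E (Q.sliceL ω (Q.Delta x)) = ω 1 • E x := by
  have hd : x = (1 / 2 : ℂ) • (x + star x)
      + (-Complex.I / 2) • (Complex.I • (x - star x)) := by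
    rw [smul_smul]
    have : -Complex.I / 2 * Complex.I = 1 / 2 := by
      rw [div_mul_eq_mul_div, neg_mul, Complex.I_mul_I, neg_neg]
    rw [this]
    module
  have s2 : IsSelfAdjoint (Complex.I • (x - star x)) := by
    rw [IsSelfAdjoint, star_smul, star_sub, star_star]
    simp only [RCLike.star_def, Complex.conj_I]
    module
  have hsx : star x ∈ Q.M := star_mem hx
  have hsa : ∀ y ∈ Q.M, IsSelfAdjoint y → E (Q.sliceL ω (Q.Delta y)) = ω 1 • E y :=
    fun y hy hys => slice_sa Q E hE hEcen hy hys (hω 1) fun ζ =>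
      slice_hasSum Q hξ hξ hω (Q.Delta y) ζ ζ
  have i1 := hsa _ (add_mem hx hsx) (IsSelfAdjoint.add_star_self x)
  have i2 := hsa _ (smul_mem_vna _ Complex.I (sub_mem hx hsx)) s2
  rw [hd, Delta_add, Delta_smul, Delta_smul Q (-Complex.I / 2)]
  simp only [map_add, map_smul] at i1 i2 ⊢
  rw [Delta_smul] at i2 ⊢
  simp only [map_smul] at i1 i2 ⊢
  rw [i1, i2]
  module

theorem slice_normal (Q : LCQG H H2)
    (E : B H →ₗ[ℂ] B H) (hE : IsConditionalExpectation H Q.Mhat E)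
    (hEcen : ∀ x ∈ Q.M, E x ∈ center H Q.Mhat) {x : B H} (hx : x ∈ Q.M)
    {ω : B H →ₗ[ℂ] ℂ} (hω : IsNormalFunctional H ω) :
    E (Q.sliceL ω (Q.Delta x)) = ω 1 • E x := by
  obtain ⟨ξ, η, hξ, hη, hs⟩ := hω
  have hsum : ∀ c : ℂ, Summable (fun n => ‖ξ n + c • η n‖ ^ 2) := by
    intro c
    refine Summable.of_nonneg_of_le (fun n => by positivity) (fun n => ?_)
      ((hξ.mul_left 2).add ((hη.mul_left (2 * ‖c‖ ^ 2))))
    have h1 := norm_add_le (ξ n) (c • η n)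
    rw [norm_smul] at h1
    have h2 : ‖ξ n + c • η n‖ ^ 2 ≤ (‖ξ n‖ + ‖c‖ * ‖η n‖) ^ 2 := by gcongr
    nlinarith [sq_nonneg (‖ξ n‖ - ‖c‖ * ‖η n‖)]
  let φ : ℂ → (B H →ₗ[ℂ] ℂ) := fun c => normalF (fun n => ξ n + c • η n) (fun n => ξ n + c • η n)
    (summable_mul_aux (hsum c) (hsum c))
  have hφ : ∀ c (x : B H), HasSum (fun n => ⟪ξ n + c • η n, x (ξ n + c • η n)⟫) (φ c x) :=
    fun c x => normalF_hasSum _ _ _ x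
  have hdiag := fun c => slice_diag Q E hE hEcen hx (hsum c) (hφ c)
  -- polarization
  have pol : ∀ y : B H, ω y = (1 / 4 : ℂ) * (φ 1 y - φ (-1) y + Complex.I * φ Complex.I y
      - Complex.I * φ (-Complex.I) y) := by
    intro y
    refine (hs y).unique ?_
    have := (((((hφ 1 y).sub (hφ (-1) y)).add ((hφ Complex.I y).mul_left Complex.I)).sub
      ((hφ (-Complex.I) y).mul_left Complex.I)).mul_left (1 / 4 : ℂ))
    refine hasSum_transport this (fun n => ?_) rfl
    simp only [map_add, map_smul, inner_add_left, inner_add_right, inner_smul_left,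
      inner_smul_right, map_one, map_neg, Complex.conj_I]
    ring_nf
    simp only [Complex.I_sq]
    ring
  have pol2 : Q.sliceL ω (Q.Delta x) = (1 / 4 : ℂ) • (Q.sliceL (φ 1) (Q.Delta x)
      - Q.sliceL (φ (-1)) (Q.Delta x) + Complex.I • Q.sliceL (φ Complex.I) (Q.Delta x)
      - Complex.I • Q.sliceL (φ (-Complex.I)) (Q.Delta x)) := by
    ext ζ
    refine ext_inner_left ℂ fun θ => ?_
    refine (slice_hasSum Q hξ hη hs (Q.Delta x) ζ θ).unique ?_
    have hh := fun c => slice_hasSum Q (hsum c) (hsum c) (hφ c) (Q.Delta x) ζ θ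
    have := (((((hh 1).sub (hh (-1))).add ((hh Complex.I).mul_left Complex.I)).sub
      ((hh (-Complex.I)).mul_left Complex.I)).mul_left (1 / 4 : ℂ))
    refine hasSum_transport this (fun n => ?_) ?_
    · simp only [map_add, map_smul, inner_add_left, inner_add_right, inner_smul_left,
        inner_smul_right, map_one, map_neg, Complex.conj_I, LinearMap.add_apply,
        LinearMap.smul_apply]
      ring_nf
      simp only [Complex.I_sq]
      ring
    · simp only [ContinuousLinearMap.smul_apply, ContinuousLinearMap.sub_apply,
        ContinuousLinearMap.add_apply, inner_smul_right, inner_sub_right, inner_add_right]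
  rw [pol2, pol 1]
  simp only [map_add, map_sub, map_smul, hdiag]
  module

end Mean

/-- If `E` is a conditional expectation of `B(L²(𝔾))` onto `L∞(𝔾̂)` mapping `L∞(𝔾)` into
the center of `L∞(𝔾̂)`, then for any state `ρ` of `L∞(𝔾̂)`, the functional
`m := ρ ∘ E|_{L∞(𝔾)}` is a left-invariant mean on `L∞(𝔾)`; in particular `𝔾` is amenable. -/
theorem conditional_expectation_gives_mean (Q : LCQG H H2)
    (E : B H →ₗ[ℂ] B H) (hE : IsConditionalExpectation H Q.Mhat E)
    (hEcen : ∀ x ∈ Q.M, E x ∈ center H Q.Mhat)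
    (ρ : B H →ₗ[ℂ] ℂ) (hρ : IsStateOn H Q.Mhat ρ) :
    Q.IsLeftInvariantMean (ρ ∘ₗ E) ∧ Q.Amenable := by
  have hmean : Q.IsLeftInvariantMean (ρ ∘ₗ E) := by
    refine ⟨⟨?_, ?_⟩, ?_⟩
    · rw [LinearMap.comp_apply, hE.unital, hρ.1]
    · intro x _ hx
      exact hρ.2 _ (hE.mem_range x) (hE.positive x hx)
    · intro x hx ω hω
      rw [LinearMap.comp_apply, LinearMap.comp_apply, slice_normal Q E hE hEcen hx hω, map_smul,
        smul_eq_mul]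
  exact ⟨hmean, _, hmean⟩

end LCQGNote
end
end
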